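/- arXiv:0902.0833 — 2 statements merged into one kernel-verified Lean document; each statement's English description precedes it below -/
import Mathlib

section
/- Let β ∈ B_3^{+*} and let c be the <_right-greatest code of β. If c is not identically zero and m := max{t ≥ −1 : c_t ≠ 0} satisfies m ≥ 1, then c_t ≥ 1 for every index t with 1 ≤ t ≤ m. -/
/-- The defining relations of the braid group on `n` strands, inside the free group on
generators indexed by `ℕ`.  Generator `i` corresponds to the Artin generator `σ_i`
(for `1 ≤ i ≤ n-1`); generators with index `0` or `≥ n` are killed. -/
def braidRels (n : ℕ) : Set (FreeGroup ℕ) :=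
  {r | (∃ i j : ℕ, 1 ≤ i ∧ i + 2 ≤ j ∧ j ≤ n - 1 ∧
          r = FreeGroup.of i * FreeGroup.of j * (FreeGroup.of i)⁻¹ * (FreeGroup.of j)⁻¹) ∨
       (∃ i : ℕ, 1 ≤ i ∧ i + 1 ≤ n - 1 ∧
          r = FreeGroup.of i * FreeGroup.of (i+1) * FreeGroup.of i *
              (FreeGroup.of (i+1) * FreeGroup.of i * FreeGroup.of (i+1))⁻¹) ∨
       (∃ i : ℕ, (i = 0 ∨ n ≤ i) ∧ r = FreeGroup.of i)}

/-- The braid group `B_n` on `n` strands. -/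
abbrev Braid (n : ℕ) := PresentedGroup (braidRels n)

/-- The Artin generator `σ_i` of `B_n`. -/
def genσ (n i : ℕ) : Braid n := PresentedGroup.of i

/-- The band generator `a_{i,j} = (σ_{j-1} ⋯ σ_{i+1}) σ_i (σ_{i+1}⁻¹ ⋯ σ_{j-1}⁻¹)`. -/
def band (n i j : ℕ) : Braid n :=
  (((List.range' (i+1) (j-1-i)).reverse.map (genσ n)).prod) * genσ n i *
    (((List.range' (i+1) (j-1-i)).reverse.map (genσ n)).prod)⁻¹

/-- The dual braid monoid `B_n^{+*}`: the submonoid of `B_n` generated by the band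
generators `a_{i,j}`, `1 ≤ i < j ≤ n`. -/
def dualMonoid (n : ℕ) : Submonoid (Braid n) :=
  Submonoid.closure {x | ∃ i j : ℕ, 1 ≤ i ∧ i < j ∧ j ≤ n ∧ x = band n i j}

/-- The submonoid `B_I^{+*}` generated by the band generators `a_{i,j}` with `i, j ∈ I`. -/
def dualMonoidOn (n : ℕ) (I : Set ℕ) : Submonoid (Braid n) :=
  Submonoid.closure {x | ∃ i j : ℕ, i ∈ I ∧ j ∈ I ∧ 1 ≤ i ∧ i < j ∧ j ≤ n ∧ x = band n i j}

/-- Evaluation of a word in the letters `σ_i^{±1}` (a letter is a pair of an index and a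
sign, `true` meaning positive). -/
def evalWord (n : ℕ) (w : List (ℕ × Bool)) : Braid n :=
  (w.map (fun p => if p.2 then genσ n p.1 else (genσ n p.1)⁻¹)).prod

/-- `γ` is `σ_i`-positive: it is represented by a word in the letters `σ_1^{±1}, …,
σ_{n-1}^{±1}` containing at least one `σ_i`, no `σ_i⁻¹`, and no `σ_j^{±1}` with `j < i`. -/
def SigmaPositive (n i : ℕ) (γ : Braid n) : Prop :=
  ∃ w : List (ℕ × Bool),
    (∀ p ∈ w, 1 ≤ p.1 ∧ p.1 ≤ n - 1) ∧
    (i, true) ∈ w ∧ (i, false) ∉ w ∧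
    (∀ p ∈ w, i ≤ p.1) ∧
    evalWord n w = γ

/-- The Dehornoy ordering on `B_n`: `α <_D β` iff `α⁻¹β` is `σ_i`-positive for some `i`. -/
def dehornoyLt (n : ℕ) (α β : Braid n) : Prop :=
  ∃ i : ℕ, 1 ≤ i ∧ i ≤ n - 1 ∧ SigmaPositive n i (α⁻¹ * β)

/-- For `t ≥ -1`: `g_t = a_{1,2}` if `t ≡ 0 (mod 3)`, `g_t = a_{1,3}` if `t ≡ 1`,
and `g_t = a_{2,3}` if `t ≡ 2`. -/
def g3 (t : ℤ) : Braid 3 :=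
  if t % 3 = 0 then band 3 1 2 else if t % 3 = 1 then band 3 1 3 else band 3 2 3

/-- The product `g_t^{c_t} g_{t-1}^{c_{t-1}} ⋯ g_0^{c_0} g_{-1}^{c_{-1}}` (for `t ≥ -1`). -/
def tailProd3 (c : ℤ → ℕ) (t : ℤ) : Braid 3 :=
  ((List.range (t + 2).toNat).map (fun k => g3 (t - k) ^ c (t - k))).prod

/-- `c` is a code of `β ∈ B_3^{+*}`: `c` vanishes below `-1`, and for some `m` with
`c_t = 0` for all `t > m` one has `β = g_m^{c_m} ⋯ g_{-1}^{c_{-1}}`. -/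
def IsCode3 (β : Braid 3) (c : ℤ → ℕ) : Prop :=
  (∀ t : ℤ, t < -1 → c t = 0) ∧
  ∃ m : ℕ, (∀ t : ℤ, (m : ℤ) < t → c t = 0) ∧ β = tailProd3 c (m : ℤ)

/-- `c <_left c'`: at the largest index `l` where they differ, `c_l < c'_l`. -/
def codeLtLeft (c c' : ℤ → ℕ) : Prop :=
  ∃ l : ℤ, c l < c' l ∧ ∀ t : ℤ, l < t → c t = c' t

/-- `c <_right c'`: at the smallest index `l` where they differ, `c_l < c'_l`. -/
def codeLtRight (c c' : ℤ → ℕ) : Prop :=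
  ∃ l : ℤ, c l < c' l ∧ ∀ t : ℤ, t < l → c t = c' t

/-- `c` is the `<_right`-greatest code of `β`. -/
def IsGreatestCode3 (β : Braid 3) (c : ℤ → ℕ) : Prop :=
  IsCode3 β c ∧ ∀ c' : ℤ → ℕ, IsCode3 β c' → c' ≠ c → codeLtRight c' c

/-!
In `B_3` the elements `g_t g_{t+1}` all coincide, so, the sequence being `3`-periodic,
`g_{t+1} g_{t-1} = g_t g_{t+1}`: moving one letter `g_{t+1}` rightwards across a block `g_{t-1}^b`
turns the block into `g_t^b`, and the letter itself reads as `g_{t-2}`. Suppose a code has a zero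
at some `t ≥ 1` followed by a nonzero entry at `t + 1`. Then `g_{t+1}^(a+1) g_{t-1}^b g_{t-2}^k` can
be replaced by `g_{t+1}^a g_t^b g_{t-2}^(k+1)`, which yields a `<_right`-larger code of the same
braid. Hence in the greatest code a zero at an index `≥ 1` is followed by zeros only.
-/

variable {β : Braid 3} {c d : ℤ → ℕ} {t : ℤ}

theorem genσ_mul_genσ_succ_mul_genσ {n i : ℕ} (hi : 1 ≤ i) (hin : i + 1 ≤ n - 1) :
    genσ n i * genσ n (i + 1) * genσ n i = genσ n (i + 1) * genσ n i * genσ n (i + 1) := by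
  rw [← mul_inv_eq_one]
  exact PresentedGroup.one_of_mem (Or.inr (Or.inl ⟨i, hi, hin, rfl⟩))

theorem band_self_succ (n i : ℕ) : band n i (i + 1) = genσ n i := by
  simp [band]

theorem band_succ_right (n : ℕ) {i j : ℕ} (hij : i < j) :
    band n i (j + 1) = genσ n j * band n i j * (genσ n j)⁻¹ := by
  have hrange : List.range' (i + 1) (j + 1 - 1 - i) = List.range' (i + 1) (j - 1 - i) ++ [j] := by
    rw [show j + 1 - 1 - i = j - 1 - i + 1 by lia, List.range'_1_concat,
      show i + 1 + (j - 1 - i) = j by lia]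
  simp only [band, hrange, List.reverse_append, List.reverse_singleton, List.singleton_append,
    List.map_cons, List.prod_cons]
  group

theorem semiconjBy_genσ_band (n : ℕ) {i j : ℕ} (hij : i < j) :
    SemiconjBy (genσ n j) (band n i j) (band n i (j + 1)) := by
  rw [band_succ_right n hij]
  exact SemiconjBy.conj_mk _ _

theorem semiconjBy_genσ_band_add_two {n i : ℕ} (hi : 1 ≤ i) (hin : i + 1 ≤ n - 1) :
    SemiconjBy (genσ n i) (band n i (i + 2)) (genσ n (i + 1)) := by
  rw [SemiconjBy, band_succ_right n (Nat.lt_succ_self i), band_self_succ, ← mul_assoc, ← mul_assoc,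
    genσ_mul_genσ_succ_mul_genσ hi hin, mul_inv_cancel_right]

theorem g3_sub_three (t : ℤ) : g3 (t - 3) = g3 t := by
  simp only [g3, Int.sub_emod_right]

theorem semiconjBy_g3 (t : ℤ) : SemiconjBy (g3 (t + 1)) (g3 (t - 1)) (g3 t) := by
  have h₂₃ : SemiconjBy (band 3 2 3) (band 3 1 2) (band 3 1 3) := by
    simpa only [band_self_succ] using semiconjBy_genσ_band 3 (show 1 < 2 by simp)
  have h₁₂ : SemiconjBy (band 3 1 2) (band 3 1 3) (band 3 2 3) := by
    simpa only [band_self_succ] using semiconjBy_genσ_band_add_two (n := 3) le_rfl le_rfl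
  have h₁₃ : SemiconjBy (band 3 1 3) (band 3 2 3) (band 3 1 2) := h₂₃.symm.trans h₁₂.symm
  obtain h | h | h : t % 3 = 0 ∨ t % 3 = 1 ∨ t % 3 = 2 := by lia
  · simpa [g3, h, show (t + 1) % 3 = 1 by lia, show (t - 1) % 3 = 2 by lia] using h₁₃
  · simpa [g3, h, show (t + 1) % 3 = 2 by lia, show (t - 1) % 3 = 0 by lia] using h₂₃
  · simpa [g3, h, show (t + 1) % 3 = 0 by lia, show (t - 1) % 3 = 1 by lia] using h₁₂

theorem g3_mul_g3_pow (t : ℤ) (b : ℕ) :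
    g3 (t + 1) * g3 (t - 1) ^ b = g3 t ^ b * g3 (t - 2) := by
  rw [((semiconjBy_g3 t).pow_right b).eq, ← g3_sub_three (t + 1), show t + 1 - 3 = t - 2 by ring]

theorem tailProd3_neg_two (c : ℤ → ℕ) : tailProd3 c (-2) = 1 := by
  simp [tailProd3]

theorem tailProd3_eq_mul (c : ℤ → ℕ) (ht : -1 ≤ t) :
    tailProd3 c t = g3 t ^ c t * tailProd3 c (t - 1) := by
  -- `tailProd3` casts `List.range _` to `List ℤ` by a monadic bind, hence `List.map_eq_flatMap`.
  rw [tailProd3, tailProd3, show (t + 2).toNat = (t - 1 + 2).toNat + 1 by lia,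
    List.range_succ_eq_map]
  simp [Function.comp_def, ← List.map_eq_flatMap, sub_sub, add_comm]

theorem tailProd3_congr {s n : ℤ} (hs : -2 ≤ s) (hsn : s ≤ n)
    (hcd : ∀ t, s < t → t ≤ n → c t = d t) (h : tailProd3 c s = tailProd3 d s) :
    tailProd3 c n = tailProd3 d n := by
  induction n, hsn using Int.leInduction with
  | base => exact h
  | succ n hn ih =>
    rw [tailProd3_eq_mul c (by lia), tailProd3_eq_mul d (by lia), add_sub_cancel_right,
      hcd (n + 1) (by lia) le_rfl, ih fun t hst htn => hcd t hst (by lia)]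

/-- The sequence of exponents obtained from `c` by carrying one letter `g_{t+1}` down to `g_{t-2}`,
across a block of letters `g_{t-1}` which thereby become letters `g_t`. The old value of `c` at `t`
is discarded and `c (t + 1) - 1` is truncated, so this represents the same braid as `c` only when
`c t = 0` and `c (t + 1) ≠ 0`. -/
def codeExchange (c : ℤ → ℕ) (t s : ℤ) : ℕ :=
  if s = t + 1 then c (t + 1) - 1
  else if s = t then c (t - 1)
  else if s = t - 1 then 0
  else if s = t - 2 then c (t - 2) + 1
  else c s

theorem codeExchange_of_lt (c : ℤ → ℕ) {s : ℤ} (hs : s < t - 2) : codeExchange c t s = c s := by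
  grind [codeExchange]

theorem codeExchange_of_gt (c : ℤ → ℕ) {s : ℤ} (hs : t + 1 < s) : codeExchange c t s = c s := by
  grind [codeExchange]

theorem codeExchange_sub_two (c : ℤ → ℕ) (t : ℤ) : codeExchange c t (t - 2) = c (t - 2) + 1 := by
  grind [codeExchange]

theorem codeLtRight_codeExchange (c : ℤ → ℕ) (t : ℤ) : codeLtRight c (codeExchange c t) :=
  ⟨t - 2, by simp only [codeExchange_sub_two, Nat.lt_succ_self],
    fun _ hs => (codeExchange_of_lt c hs).symm⟩

theorem tailProd3_add_one_eq_mul (c : ℤ → ℕ) (ht : 1 ≤ t) :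
    tailProd3 c (t + 1) = g3 (t + 1) ^ c (t + 1) * (g3 t ^ c t *
      (g3 (t - 1) ^ c (t - 1) * (g3 (t - 2) ^ c (t - 2) * tailProd3 c (t - 3)))) := by
  rw [tailProd3_eq_mul c (t := t + 1) (by lia), add_sub_cancel_right,
    tailProd3_eq_mul c (t := t) (by lia), tailProd3_eq_mul c (t := t - 1) (by lia),
    show t - 1 - 1 = t - 2 by ring, tailProd3_eq_mul c (t := t - 2) (by lia),
    show t - 2 - 1 = t - 3 by ring]

theorem tailProd3_codeExchange_add_one (ht : 1 ≤ t) (hct : c t = 0) (hct' : c (t + 1) ≠ 0) :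
    tailProd3 (codeExchange c t) (t + 1) = tailProd3 c (t + 1) := by
  obtain ⟨a, ha⟩ := Nat.exists_eq_succ_of_ne_zero hct'
  have h_add_one : codeExchange c t (t + 1) = a := by simp [codeExchange, ha]
  have h_self : codeExchange c t t = c (t - 1) := by simp [codeExchange]
  have h_sub_one : codeExchange c t (t - 1) = 0 := by grind [codeExchange]
  have h_tail : tailProd3 (codeExchange c t) (t - 3) = tailProd3 c (t - 3) :=
    tailProd3_congr le_rfl (by lia) (fun s _ hs => codeExchange_of_lt c (by lia))
      (by simp only [tailProd3_neg_two])
  rw [tailProd3_add_one_eq_mul _ ht, tailProd3_add_one_eq_mul _ ht, h_tail, h_add_one, h_self,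
    h_sub_one, codeExchange_sub_two, hct, ha]
  set R := tailProd3 c (t - 3)
  calc g3 (t + 1) ^ a * (g3 t ^ c (t - 1) * (g3 (t - 1) ^ 0 * (g3 (t - 2) ^ (c (t - 2) + 1) * R)))
      = g3 (t + 1) ^ a * (g3 t ^ c (t - 1) * g3 (t - 2)) * (g3 (t - 2) ^ c (t - 2) * R) := by
        simp only [pow_zero, one_mul, pow_succ', mul_assoc]
    _ = g3 (t + 1) ^ a * (g3 (t + 1) * g3 (t - 1) ^ c (t - 1)) * (g3 (t - 2) ^ c (t - 2) * R) := by
        rw [g3_mul_g3_pow]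
    _ = g3 (t + 1) ^ (a + 1) *
          (g3 t ^ 0 * (g3 (t - 1) ^ c (t - 1) * (g3 (t - 2) ^ c (t - 2) * R))) := by
        simp only [pow_zero, one_mul, pow_succ, mul_assoc]

theorem IsCode3.exchange (hc : IsCode3 β c) (ht : 1 ≤ t) (hct : c t = 0) (hct' : c (t + 1) ≠ 0) :
    IsCode3 β (codeExchange c t) := by
  obtain ⟨hlow, m, hm, rfl⟩ := hc
  have htm : t + 1 ≤ m := by
    by_contra! h
    exact hct' (hm _ h)
  refine ⟨fun s hs => ?_, m, fun s hs => ?_, ?_⟩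
  · rw [codeExchange_of_lt c (by lia), hlow s hs]
  · rw [codeExchange_of_gt c (by lia), hm s hs]
  · exact tailProd3_congr (by lia) htm (fun s hs _ => (codeExchange_of_gt c hs).symm)
      (tailProd3_codeExchange_add_one ht hct hct').symm

theorem codeLtRight.asymm (h : codeLtRight c d) : ¬ codeLtRight d c := by
  rintro ⟨l', hl', heq'⟩
  obtain ⟨l, hl, heq⟩ := h
  obtain hlt | rfl | hgt := lt_trichotomy l l'
  · exact hl.ne' (heq' l hlt)
  · exact hl.asymm hl'
  · exact hl'.ne' (heq l' hgt)

theorem IsGreatestCode3.not_codeLtRight (hc : IsGreatestCode3 β c) (hd : IsCode3 β d) :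
    ¬ codeLtRight c d := by
  intro h
  have hne : d ≠ c := by
    rintro rfl
    exact h.asymm h
  exact h.asymm (hc.2 d hd hne)

theorem IsGreatestCode3.eq_zero_add_one (hc : IsGreatestCode3 β c) (ht : 1 ≤ t) (hct : c t = 0) :
    c (t + 1) = 0 := by
  by_contra hct'
  exact hc.not_codeLtRight (hc.1.exchange ht hct hct') (codeLtRight_codeExchange c t)

theorem IsGreatestCode3.eq_zero_of_le (hc : IsGreatestCode3 β c) (ht : 1 ≤ t) (hct : c t = 0)
    {s : ℤ} (hts : t ≤ s) : c s = 0 := by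
  induction s, hts using Int.leInduction with
  | base => exact hct
  | succ s hs ih => exact hc.eq_zero_add_one (ht.trans hs) ih

/-- Theorem: if `c` is the `<_right`-greatest code of `β ∈ B_3^{+*}` and
`m = max {t ≥ -1 : c_t ≠ 0}` satisfies `m ≥ 1`, then `c_t ≥ 1` for all `1 ≤ t ≤ m`. -/
theorem greatest_code_middle_nonzero (β : Braid 3) (hβ : β ∈ dualMonoid 3)
    (c : ℤ → ℕ) (hc : IsGreatestCode3 β c)
    (m : ℤ) (hm0 : c m ≠ 0) (hmax : ∀ t : ℤ, c t ≠ 0 → t ≤ m) (hm1 : 1 ≤ m) :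
    ∀ t : ℤ, 1 ≤ t → t ≤ m → 1 ≤ c t := by
  intro t ht htm
  exact Nat.one_le_iff_ne_zero.mpr fun hct => hm0 (hc.eq_zero_of_le ht hct htm)
end

section
/- (Property S for the Dehornoy ordering with respect to band generators.) For all α, β ∈ B_n and all indices 1 ≤ i < j ≤ n, one has α β <_D α a_{i,j} β and α a_{i,j}^{−1} β <_D α β. -/
/-!
Since `(αβ)⁻¹ · α a β` is a conjugate of `a`, and `a` is a conjugate of some `σᵢ`, both inequalities
say that a conjugate of a generator `σᵢ` is `σ_r`-positive for some `r`.

Let `B_n` act on the free group on `x₀, x₁, …` by Artin's automorphisms. The action preserves the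
cyclic order that the planar Cayley tree puts on the free group, and for this order `σᵢ` moves every
element it does not fix in the same direction around `1`. Both facts together show that a conjugate
`b` of `σᵢ` does the same. If `r` is maximal such that `b` is a braid on the
strands after the `r`-th one, then `b` does not fix `x_{r+1}`, because the stabilizer of `x_{r+1}`
among those braids consists of the braids on the strands after the `(r+1)`-th one; as the image of
`x_{r+1}` is a word in `x_{r+1}, x_{r+2}, …` only, it must then begin with the letter `x_{r+1}`.

For such a braid a word without `σ_{r+1}⁻¹` is found by induction on the total length of the images
`yⱼ` of the generators. These are conjugates of generators with the same product as the generators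
themselves, so that unless `y_{r+1} = x_{r+1}`, two neighbours `yⱼ, yⱼ₊₁` cancel so much that
multiplying by a suitable `σⱼ^{±1}` shortens one of them; and `y_{r+1}` beginning with `x_{r+1}`
excludes the sign that would split off a `σ_{r+1}⁻¹`.
-/

theorem evalWord_append (n : ℕ) (v w : List (ℕ × Bool)) :
    evalWord n (v ++ w) = evalWord n v * evalWord n w := by
  simp [evalWord]

namespace SigmaPositive

variable {n i j : ℕ} {γ : Braid n}

theorem mul_mul (h : SigmaPositive n i γ) {u v : List (ℕ × Bool)}
    (hu : ∀ p ∈ u, i ≤ p.1 ∧ p.1 < n ∧ p ≠ (i, false))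
    (hv : ∀ p ∈ v, i ≤ p.1 ∧ p.1 < n ∧ p ≠ (i, false)) :
    SigmaPositive n i (evalWord n u * γ * evalWord n v) := by
  obtain ⟨w, hw, hpos, hneg, hle, rfl⟩ := h
  have hi := (hw _ hpos).1
  refine ⟨u ++ w ++ v, ?_, by simp [hpos], ?_, ?_, by simp only [evalWord_append]⟩
  all_goals grind

theorem mul_genσ (h : SigmaPositive n i γ) (hij : i ≤ j) (hjn : j < n) :
    SigmaPositive n i (γ * genσ n j) := by
  have := h.mul_mul (u := []) (v := [(j, true)]) (by simp) (by simp [hij, hjn])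
  simpa [evalWord] using this

theorem mul_inv_genσ (h : SigmaPositive n i γ) (hij : i < j) (hjn : j < n) :
    SigmaPositive n i (γ * (genσ n j)⁻¹) := by
  have := h.mul_mul (u := []) (v := [(j, false)]) (by simp) (by simp [hij.le, hij.ne', hjn])
  simpa [evalWord] using this

theorem genσ_mul (h : SigmaPositive n i γ) (hij : i ≤ j) (hjn : j < n) :
    SigmaPositive n i (genσ n j * γ) := by
  have := h.mul_mul (u := [(j, true)]) (v := []) (by simp [hij, hjn]) (by simp)
  simpa [evalWord] using this

theorem inv_genσ_mul (h : SigmaPositive n i γ) (hij : i < j) (hjn : j < n) :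
    SigmaPositive n i ((genσ n j)⁻¹ * γ) := by
  have := h.mul_mul (u := [(j, false)]) (v := []) (by simp [hij.le, hij.ne', hjn]) (by simp)
  simpa [evalWord] using this

end SigmaPositive

theorem sigmaPositive_genσ {n i : ℕ} (hi : 0 < i) (hin : i < n) : SigmaPositive n i (genσ n i) :=
  ⟨[(i, true)], by simp; omega, by simp, by simp, by simp, by simp [evalWord]⟩

namespace DehornoyOrder

open FreeGroup hiding map_mul map_inv map_one

/-! ### Directions in the Cayley tree of the free group -/

theorem toWord_mul_of_head?_ne {α : Type*} [DecidableEq α] {u v : FreeGroup α}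
    (h : ∀ a ∈ u⁻¹.toWord.head?, a ∉ v.toWord.head?) :
    (u * v).toWord = u.toWord ++ v.toWord := by
  rw [toWord_mul]
  refine IsReduced.reduce_eq (List.isChain_append.2 ⟨isReduced_toWord, isReduced_toWord, ?_⟩)
  intro a ha b hb hab
  by_contra hne
  refine h (a.1, !a.2) ?_ ?_
  · simpa [toWord_inv, invRev] using ha
  · rwa [show (a.1, !a.2) = b from Prod.ext hab (Bool.not_eq_eq_eq_not.2 (Bool.eq_not_of_ne hne))]

/-- The label of the edge of the Cayley tree leaving a vertex along the letter `s`. The labels put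
the edges at every vertex into the planar order `x₀, x₀⁻¹, x₁, x₁⁻¹, …`. -/
def letterLabel (s : ℕ × Bool) : ℕ := if s.2 then 2 * s.1 + 1 else 2 * s.1 + 2

/-- The label of the first letter of the reduced word of `g`, that is, of the edge of the Cayley
tree at the vertex `1` pointing towards `g`; it is `0` when `g = 1`. -/
def dir (g : FreeGroup ℕ) : ℕ := g.toWord.head?.elim 0 letterLabel

theorem letterLabel_injective : Function.Injective letterLabel := by
  rintro ⟨i, _ | _⟩ ⟨j, _ | _⟩ h <;> simp [letterLabel] at h ⊢ <;> omega

theorem letterLabel_ne_zero (s : ℕ × Bool) : letterLabel s ≠ 0 := by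
  unfold letterLabel
  split_ifs <;> omega

theorem dir_eq_of_toWord_eq_cons {g : FreeGroup ℕ} {s : ℕ × Bool} {l : List (ℕ × Bool)}
    (h : g.toWord = s :: l) : dir g = letterLabel s := by
  simp [dir, h]

@[simp] theorem dir_one : dir 1 = 0 := by simp [dir]

@[simp] theorem dir_of (i : ℕ) : dir (of i) = 2 * i + 1 := by simp [dir, letterLabel]

@[simp] theorem dir_inv_of (i : ℕ) : dir (of i)⁻¹ = 2 * i + 2 := by
  simp [dir, letterLabel, toWord_inv, invRev]

theorem dir_eq_zero {g : FreeGroup ℕ} : dir g = 0 ↔ g = 1 := by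
  rw [← toWord_eq_nil_iff]
  cases h : g.toWord with
  | nil => simp [dir, h]
  | cons s l => simp [dir_eq_of_toWord_eq_cons h, letterLabel_ne_zero]

theorem toWord_mul_of_dir_ne {u v : FreeGroup ℕ} (h : dir u⁻¹ ≠ dir v) :
    (u * v).toWord = u.toWord ++ v.toWord := by
  refine toWord_mul_of_head?_ne fun a ha ha' => h ?_
  rw [dir, dir, Option.mem_def.1 ha, Option.mem_def.1 ha']

theorem norm_mul_of_dir_ne {u v : FreeGroup ℕ} (h : dir u⁻¹ ≠ dir v) :
    (u * v).norm = u.norm + v.norm := by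
  simp [FreeGroup.norm, toWord_mul_of_dir_ne h]

theorem dir_mul_of_dir_ne {u v : FreeGroup ℕ} (hu : u ≠ 1) (h : dir u⁻¹ ≠ dir v) :
    dir (u * v) = dir u := by
  rw [dir, toWord_mul_of_dir_ne h, List.head?_append_of_ne_nil _ (by simpa using hu), dir]

theorem dir_of_mul {i : ℕ} {g : FreeGroup ℕ} (h : dir g ≠ 2 * i + 2) :
    dir (of i * g) = 2 * i + 1 := by
  rw [dir_mul_of_dir_ne (of_ne_one i) (by simpa using h.symm), dir_of]

theorem dir_inv_of_mul {i : ℕ} {g : FreeGroup ℕ} (h : dir g ≠ 2 * i + 1) :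
    dir ((of i)⁻¹ * g) = 2 * i + 2 := by
  rw [dir_mul_of_dir_ne (inv_ne_one.2 (of_ne_one i)) (by simpa using h.symm), dir_inv_of]

theorem norm_of_mul {i : ℕ} {g : FreeGroup ℕ} (h : dir g ≠ 2 * i + 2) :
    (of i * g).norm = g.norm + 1 := by
  rw [norm_mul_of_dir_ne (by simpa using h.symm), norm_of, add_comm]

theorem norm_inv_of_mul {i : ℕ} {g : FreeGroup ℕ} (h : dir g ≠ 2 * i + 1) :
    ((of i)⁻¹ * g).norm = g.norm + 1 := by
  rw [norm_mul_of_dir_ne (by simpa using h.symm), norm_inv_eq, norm_of, add_comm]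

theorem toWord_inv_mk_singleton_mul {g : FreeGroup ℕ} {s : ℕ × Bool} {l : List (ℕ × Bool)}
    (h : g.toWord = s :: l) : ((mk [s])⁻¹ * g).toWord = l := by
  have hl : IsReduced l := (h ▸ isReduced_toWord (x := g)).tail
  have hg : g = mk [s] * mk l := by rw [mul_mk, List.singleton_append, ← h, mk_toWord]
  rw [hg, inv_mul_cancel_left, toWord_mk, hl.reduce_eq]

theorem exists_toWord_eq_cons {g : FreeGroup ℕ} {s : ℕ × Bool} (h : dir g = letterLabel s) :
    ∃ l, g.toWord = s :: l := by
  cases hg : g.toWord with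
  | nil => simp [dir, hg, (letterLabel_ne_zero s).symm] at h
  | cons t l =>
    rw [dir_eq_of_toWord_eq_cons hg] at h
    exact ⟨l, by rw [letterLabel_injective h]⟩

theorem norm_inv_mk_singleton_mul {g : FreeGroup ℕ} {s : ℕ × Bool} (h : dir g = letterLabel s) :
    ((mk [s])⁻¹ * g).norm + 1 = g.norm := by
  obtain ⟨l, hl⟩ := exists_toWord_eq_cons h
  rw [FreeGroup.norm, toWord_inv_mk_singleton_mul hl, FreeGroup.norm, hl, List.length_cons]

theorem norm_inv_of_mul_of_dir_eq {i : ℕ} {g : FreeGroup ℕ} (h : dir g = 2 * i + 1) :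
    ((of i)⁻¹ * g).norm + 1 = g.norm :=
  norm_inv_mk_singleton_mul (s := (i, true)) h

theorem norm_of_mul_of_dir_eq {i : ℕ} {g : FreeGroup ℕ} (h : dir g = 2 * i + 2) :
    (of i * g).norm + 1 = g.norm :=
  norm_inv_mk_singleton_mul (s := (i, false)) h

theorem dir_inv_of_mul_ne {i : ℕ} {g : FreeGroup ℕ} (h : dir g = 2 * i + 1) :
    dir ((of i)⁻¹ * g) ≠ 2 * i + 2 := by
  intro h'
  have := norm_of_mul_of_dir_eq h'
  have := norm_inv_of_mul_of_dir_eq h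
  rw [mul_inv_cancel_left] at *
  omega

theorem dir_of_mul_ne {i : ℕ} {g : FreeGroup ℕ} (h : dir g = 2 * i + 2) :
    dir (of i * g) ≠ 2 * i + 1 := by
  intro h'
  have := norm_inv_of_mul_of_dir_eq h'
  have := norm_of_mul_of_dir_eq h
  rw [inv_mul_cancel_left] at *
  omega

theorem dir_inv_of_mul_ne_of_dir_ne {i : ℕ} {e y : FreeGroup ℕ} (h : dir e ≠ dir y)
    (hy : dir y = 2 * i + 1) : dir ((of i)⁻¹ * e) ≠ dir ((of i)⁻¹ * y) := by
  rw [dir_inv_of_mul (hy ▸ h)]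
  exact (dir_inv_of_mul_ne hy).symm

theorem dir_of_mul_ne_of_dir_ne {i : ℕ} {e y : FreeGroup ℕ} (h : dir e ≠ dir y)
    (hy : dir y = 2 * i + 2) : dir (of i * e) ≠ dir (of i * y) := by
  rw [dir_of_mul (hy ▸ h)]
  exact (dir_of_mul_ne hy).symm

theorem dir_cases (g : FreeGroup ℕ) :
    g = 1 ∨ ∃ i, dir g = 2 * i + 1 ∨ dir g = 2 * i + 2 := by
  rw [← dir_eq_zero]
  by_cases h : dir g = 0
  · exact .inl h
  · exact .inr ⟨(dir g - 1) / 2, by omega⟩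

theorem reduced_induction {P : FreeGroup ℕ → Prop} (one : P 1)
    (of_mul : ∀ i g, dir g ≠ 2 * i + 2 → P g → P (of i * g))
    (inv_of_mul : ∀ i g, dir g ≠ 2 * i + 1 → P g → P ((of i)⁻¹ * g)) (g : FreeGroup ℕ) :
    P g := by
  induction hk : g.norm using Nat.strong_induction_on generalizing g with
  | h k ih =>
    subst hk
    rcases dir_cases g with rfl | ⟨i, h | h⟩
    · exact one
    · have hg := norm_inv_of_mul_of_dir_eq h
      simpa using of_mul i _ (dir_inv_of_mul_ne h) (ih _ (by omega) _ rfl)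
    · have hg := norm_of_mul_of_dir_eq h
      simpa using inv_of_mul i _ (dir_of_mul_ne h) (ih _ (by omega) _ rfl)

/-! ### The Artin automorphisms and the cyclic order of the free group -/

section CyclicOrder

attribute [local instance] LinearOrder.toCircularOrder

/-- The cyclic order that the planar Cayley tree induces on the free group: `u`, `v`, `w` are
cyclically ordered when from some vertex `p` of the tree they are seen in three distinct
directions, and these are cyclically ordered. -/
def Cyc (u v w : FreeGroup ℕ) : Prop :=
  ∃ p : FreeGroup ℕ, sbtw (dir (p⁻¹ * u)) (dir (p⁻¹ * v)) (dir (p⁻¹ * w))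

theorem sbtw_nat_iff {a b c : ℕ} :
    sbtw a b c ↔ a < b ∧ b < c ∨ b < c ∧ c < a ∨ c < a ∧ a < b :=
  Iff.rfl

theorem Cyc.mul_left {u v w : FreeGroup ℕ} (h : Cyc u v w) (g : FreeGroup ℕ) :
    Cyc (g * u) (g * v) (g * w) := by
  obtain ⟨p, hp⟩ := h
  refine ⟨g * p, ?_⟩
  simpa only [mul_inv_rev, mul_assoc, inv_mul_cancel_left] using hp

theorem dir_inv_mul_eq {p q u : FreeGroup ℕ} (hpq : p ≠ q) (h : dir (p⁻¹ * u) ≠ dir (p⁻¹ * q)) :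
    dir (q⁻¹ * u) = dir (q⁻¹ * p) := by
  have hu : q⁻¹ * u = q⁻¹ * p * (p⁻¹ * u) := by group
  rw [hu]
  apply dir_mul_of_dir_ne
  · rwa [ne_eq, inv_mul_eq_one, eq_comm]
  · rwa [mul_inv_rev, inv_inv, ne_comm]

/-- Seen from any vertex other than the median of `u`, `v`, `w`, two of them lie in the same
direction. -/
theorem Cyc.asymm {u v w : FreeGroup ℕ} (h : Cyc u v w) : ¬ Cyc u w v := by
  rintro ⟨q, hq⟩
  obtain ⟨p, hp⟩ := h
  rw [sbtw_nat_iff] at hp hq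
  rcases eq_or_ne p q with rfl | hpq
  · omega
  · have hu := dir_inv_mul_eq (u := u) hpq
    have hv := dir_inv_mul_eq (u := v) hpq
    have hw := dir_inv_mul_eq (u := w) hpq
    omega

theorem exists_norm_lt_of_dir_eq {u v : FreeGroup ℕ} (huv : u ≠ v) (h : dir u = dir v)
    (w : FreeGroup ℕ) :
    ∃ q : FreeGroup ℕ, (q⁻¹ * u).norm + (q⁻¹ * v).norm + (q⁻¹ * w).norm <
      u.norm + v.norm + w.norm := by
  rcases dir_cases u with rfl | ⟨i, hu | hu⟩
  · rw [dir_one, eq_comm, dir_eq_zero] at h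
    exact absurd h.symm huv
  · have := norm_inv_of_mul_of_dir_eq hu
    have := norm_inv_of_mul_of_dir_eq (h ▸ hu)
    have := norm_mul_le (of i)⁻¹ w
    rw [norm_inv_eq, norm_of] at this
    exact ⟨of i, by omega⟩
  · have := norm_of_mul_of_dir_eq hu
    have := norm_of_mul_of_dir_eq (h ▸ hu)
    have := norm_mul_le (of i) w
    rw [norm_of] at this
    exact ⟨(of i)⁻¹, by rw [inv_inv]; omega⟩

theorem exists_dir_inv_mul_ne {u v w : FreeGroup ℕ} (huv : u ≠ v) (hvw : v ≠ w) (hwu : w ≠ u) :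
    ∃ p : FreeGroup ℕ, dir (p⁻¹ * u) ≠ dir (p⁻¹ * v) ∧ dir (p⁻¹ * v) ≠ dir (p⁻¹ * w) ∧
      dir (p⁻¹ * w) ≠ dir (p⁻¹ * u) := by
  let total (p : FreeGroup ℕ) : ℕ := (p⁻¹ * u).norm + (p⁻¹ * v).norm + (p⁻¹ * w).norm
  obtain ⟨p, hp⟩ : ∃ p, ∀ q, total p ≤ total q :=
    ⟨Function.argmin total, fun q => Function.argmin_le total q⟩
  have not_shorter (q : FreeGroup ℕ) : ¬ (q⁻¹ * (p⁻¹ * u)).norm + (q⁻¹ * (p⁻¹ * v)).norm +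
      (q⁻¹ * (p⁻¹ * w)).norm < (p⁻¹ * u).norm + (p⁻¹ * v).norm + (p⁻¹ * w).norm := by
    simpa only [total, mul_inv_rev, mul_assoc, not_lt] using hp (p * q)
  refine ⟨p, fun h => ?_, fun h => ?_, fun h => ?_⟩
  · obtain ⟨q, hq⟩ := exists_norm_lt_of_dir_eq (by simpa using huv) h (p⁻¹ * w)
    exact not_shorter q (by omega)
  · obtain ⟨q, hq⟩ := exists_norm_lt_of_dir_eq (by simpa using hvw) h (p⁻¹ * u)
    exact not_shorter q (by omega)
  · obtain ⟨q, hq⟩ := exists_norm_lt_of_dir_eq (by simpa using hwu) h (p⁻¹ * v)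
    exact not_shorter q (by omega)

theorem cyc_or_cyc_swap {u v w : FreeGroup ℕ} (huv : u ≠ v) (hvw : v ≠ w) (hwu : w ≠ u) :
    Cyc u v w ∨ Cyc u w v := by
  obtain ⟨p, h₁, h₂, h₃⟩ := exists_dir_inv_mul_ne huv hvw hwu
  have : sbtw (dir (p⁻¹ * u)) (dir (p⁻¹ * v)) (dir (p⁻¹ * w)) ∨
      sbtw (dir (p⁻¹ * u)) (dir (p⁻¹ * w)) (dir (p⁻¹ * v)) := by
    simp only [sbtw_nat_iff]
    omega
  exact this.imp (fun h => ⟨p, h⟩) fun h => ⟨p, h⟩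

/-- The endomorphism of the free group underlying `artin i`. -/
def artinHom (i : ℕ) : FreeGroup ℕ →* FreeGroup ℕ :=
  lift fun j => if j = i then of i * of (i + 1) * (of i)⁻¹ else if j = i + 1 then of i else of j

/-- The inverse of `artinHom i`. -/
def artinInvHom (i : ℕ) : FreeGroup ℕ →* FreeGroup ℕ :=
  lift fun j =>
    if j = i then of (i + 1) else if j = i + 1 then (of (i + 1))⁻¹ * of i * of (i + 1) else of j

/-- The Artin automorphism by which `σᵢ` acts on the free group. -/
def artin (i : ℕ) : MulAut (FreeGroup ℕ) :=
  (artinHom i).toMulEquiv (artinInvHom i)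
    (by
      ext j
      simp only [MonoidHom.comp_apply, artinHom, lift_apply_of, MonoidHom.id_apply]
      split_ifs with hi hi' <;> simp [artinInvHom, *, mul_assoc])
    (by
      ext j
      simp only [MonoidHom.comp_apply, artinInvHom, lift_apply_of, MonoidHom.id_apply]
      split_ifs with hi hi' <;> simp [artinHom, *, mul_assoc])

theorem artin_of (i j : ℕ) : artin i (of j) =
    if j = i then of i * of (i + 1) * (of i)⁻¹ else if j = i + 1 then of i else of j :=
  lift_apply_of

@[simp] theorem artin_of_self (i : ℕ) : artin i (of i) = of i * of (i + 1) * (of i)⁻¹ := by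
  simp [artin_of]

@[simp] theorem artin_of_succ (i : ℕ) : artin i (of (i + 1)) = of i := by
  simp [artin_of]

theorem artin_of_of_ne {i j : ℕ} (hi : j ≠ i) (hi' : j ≠ i + 1) : artin i (of j) = of j := by
  simp [artin_of, hi, hi']

theorem artin_apply_of_mul_of_succ (i : ℕ) : artin i (of i * of (i + 1)) = of i * of (i + 1) := by
  simp

theorem artin_inv_of_self (i : ℕ) : (artin i)⁻¹ (of i) = of (i + 1) := by
  rw [MulAut.inv_apply, MulEquiv.symm_apply_eq, artin_of_succ]

theorem artin_inv_of_succ (i : ℕ) :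
    (artin i)⁻¹ (of (i + 1)) = (of (i + 1))⁻¹ * of i * of (i + 1) := by
  rw [MulAut.inv_apply, MulEquiv.symm_apply_eq]
  simp [mul_assoc]

theorem artin_inv_of_of_ne {i j : ℕ} (hi : j ≠ i) (hi' : j ≠ i + 1) :
    (artin i)⁻¹ (of j) = of j := by
  rw [MulAut.inv_apply, MulEquiv.symm_apply_eq, artin_of_of_ne hi hi']

/-- Relation between the directions `p = dir g`, `q = dir (artin i g)` and
`r = dir ((of i)⁻¹ * artin i g)`, the last two being the views of `artin i g` from the two vertices
`1` and `of i` into which `artin i` splits the vertex `1`. -/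
def ArtinDirs (i p q r : ℕ) : Prop :=
  p = 2 * i + 1 ∧ q = 2 * i + 1 ∧ r = 2 * i + 3 ∨
  p = 2 * i + 2 ∧ q = 2 * i + 1 ∧ r = 2 * i + 4 ∨
  p = 2 * i + 3 ∧ q = 2 * i + 1 ∧ (r < 2 * i + 2 ∨ 2 * i + 4 < r) ∨
  p = 2 * i + 4 ∧ (2 * i + 2 ≤ q ∧ q ≤ 2 * i + 4) ∧ r = 2 * i + 2 ∨
  (p < 2 * i + 1 ∨ 2 * i + 4 < p) ∧ q = p ∧ r = 2 * i + 2

theorem artinDirs (i : ℕ) (g : FreeGroup ℕ) :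
    ArtinDirs i (dir g) (dir (artin i g)) (dir ((of i)⁻¹ * artin i g)) := by
  induction g using reduced_induction with
  | one => simp [ArtinDirs]
  | of_mul j g hg ih =>
    rw [dir_of_mul hg, map_mul, artin_of]
    unfold ArtinDirs at ih
    split_ifs with hj hj'
    · subst hj
      have hr : dir ((of j)⁻¹ * artin j g) ≠ 2 * (j + 1) + 2 := by omega
      have hr' := dir_of_mul hr
      simp only [mul_assoc, inv_mul_cancel_left]
      exact .inl ⟨rfl, dir_of_mul (by omega), hr'⟩
    · have hq : dir (artin i g) < 2 * i + 2 ∨ 2 * i + 4 < dir (artin i g) := by omega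
      rw [inv_mul_cancel_left]
      exact .inr (.inr (.inl ⟨by omega, dir_of_mul (by omega), hq⟩))
    · have hq := dir_of_mul (show dir (artin i g) ≠ 2 * j + 2 by omega)
      exact .inr (.inr (.inr (.inr ⟨by omega, hq, dir_inv_of_mul (by omega)⟩)))
  | inv_of_mul j g hg ih =>
    rw [dir_inv_of_mul hg, map_mul, map_inv, artin_of]
    unfold ArtinDirs at ih
    split_ifs with hj hj'
    · subst hj
      have hr : dir ((of j)⁻¹ * artin j g) ≠ 2 * (j + 1) + 1 := by omega
      have hr' := dir_inv_of_mul hr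
      simp only [mul_inv_rev, inv_inv, mul_assoc, inv_mul_cancel_left]
      exact .inr (.inl ⟨rfl, dir_of_mul (by omega), hr'⟩)
    · have hr : 2 * i + 2 ≤ dir ((of i)⁻¹ * artin i g) ∧
          dir ((of i)⁻¹ * artin i g) ≤ 2 * i + 4 := by omega
      exact .inr (.inr (.inr (.inl ⟨by omega, hr, dir_inv_of_mul (by omega)⟩)))
    · have hq := dir_inv_of_mul (show dir (artin i g) ≠ 2 * j + 1 by omega)
      exact .inr (.inr (.inr (.inr ⟨by omega, hq, dir_inv_of_mul (by omega)⟩)))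

theorem ArtinDirs.eq_of_ne {i p q r : ℕ} (h : ArtinDirs i p q r) (hq : q ≠ 2 * i + 1) :
    r = 2 * i + 2 := by
  unfold ArtinDirs at h
  omega

theorem ArtinDirs.lt_or_sbtw {i p q r p' q' r' : ℕ} (h : ArtinDirs i p q r)
    (h' : ArtinDirs i p' q' r') (hp : p < p') :
    q < q' ∨ q = 2 * i + 1 ∧ q' = 2 * i + 1 ∧ sbtw (2 * i + 2) r r' := by
  rw [sbtw_nat_iff]
  rcases h with h | h | h | h | h <;> rcases h' with h' | h' | h' | h' | h' <;> omega

theorem ArtinDirs.sbtw_or_sbtw_of_lt {i p q r p' q' r' p'' q'' r'' : ℕ} (h : ArtinDirs i p q r)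
    (h' : ArtinDirs i p' q' r') (h'' : ArtinDirs i p'' q'' r'') (hp : p < p') (hp' : p' < p'') :
    sbtw q q' q'' ∨ sbtw r r' r'' := by
  rcases h.lt_or_sbtw h' hp with hq | ⟨-, hq', hr⟩ <;>
    rcases h'.lt_or_sbtw h'' hp' with hq₁ | ⟨hq₁, hq₁', hr'⟩
  · exact .inl (.inl ⟨hq, hq₁⟩)
  · exact .inr (h.eq_of_ne (by omega) ▸ hr')
  · exact .inr (h''.eq_of_ne (by omega) ▸ hr).cyclic_left
  · rw [sbtw_nat_iff] at hr hr'
    exact .inr (sbtw_nat_iff.2 (by omega))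

theorem ArtinDirs.sbtw_or_sbtw {i p q r p' q' r' p'' q'' r'' : ℕ} (h : ArtinDirs i p q r)
    (h' : ArtinDirs i p' q' r') (h'' : ArtinDirs i p'' q'' r'') (hp : sbtw p p' p'') :
    sbtw q q' q'' ∨ sbtw r r' r'' := by
  rcases hp with ⟨h₁, h₂⟩ | ⟨h₁, h₂⟩ | ⟨h₁, h₂⟩
  · exact h.sbtw_or_sbtw_of_lt h' h'' h₁ h₂
  · exact (h'.sbtw_or_sbtw_of_lt h'' h h₁ h₂).imp SBtw.sbtw.cyclic_right SBtw.sbtw.cyclic_right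
  · exact (h''.sbtw_or_sbtw_of_lt h h' h₁ h₂).imp SBtw.sbtw.cyclic_left SBtw.sbtw.cyclic_left

theorem Cyc.artin {u v w : FreeGroup ℕ} (h : Cyc u v w) (i : ℕ) :
    Cyc (artin i u) (artin i v) (artin i w) := by
  obtain ⟨p, hp⟩ := h
  rcases (artinDirs i _).sbtw_or_sbtw (artinDirs i _) (artinDirs i _) hp with h | h
  · exact ⟨DehornoyOrder.artin i p, by simpa only [map_mul, map_inv] using h⟩
  · exact ⟨DehornoyOrder.artin i p * of i, by
      simpa only [map_mul, map_inv, mul_inv_rev, mul_assoc] using h⟩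

/-- The automorphisms of the free group that preserve its cyclic order. -/
def cycAut : Subgroup (MulAut (FreeGroup ℕ)) where
  carrier := {f | ∀ u v w, Cyc (f u) (f v) (f w) ↔ Cyc u v w}
  one_mem' _ _ _ := Iff.rfl
  mul_mem' hf hg u v w := (hf _ _ _).trans (hg u v w)
  inv_mem' {f} hf u v w := by simpa using (hf (f⁻¹ u) (f⁻¹ v) (f⁻¹ w)).symm

theorem Cyc.pairwise_ne {u v w : FreeGroup ℕ} (h : Cyc u v w) : u ≠ v ∧ v ≠ w ∧ w ≠ u := by
  obtain ⟨p, hp⟩ := h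
  rw [sbtw_nat_iff] at hp
  refine ⟨?_, ?_, ?_⟩ <;> rintro rfl <;> omega

theorem artin_mem_cycAut (i : ℕ) : artin i ∈ cycAut := by
  refine fun u v w => ⟨fun h => ?_, fun h => h.artin i⟩
  obtain ⟨huv, hvw, hwu⟩ := h.pairwise_ne
  refine (cyc_or_cyc_swap (ne_of_apply_ne _ huv) (ne_of_apply_ne _ hvw)
    (ne_of_apply_ne _ hwu)).resolve_right fun h' => h.asymm (h'.artin i)

theorem not_cyc_of_dir {r : ℕ} {h : FreeGroup ℕ} (hr : 2 * r + 1 < dir h) : ¬ Cyc 1 h (of r) :=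
  Cyc.asymm ⟨1, by
    simp only [inv_one, one_mul, dir_one, dir_of, sbtw_nat_iff]
    omega⟩

theorem cyc_artin_of_mul {i : ℕ} {s e y : FreeGroup ℕ} (hs : artin i s = s)
    (h : Cyc (s⁻¹ * e) (artin i y) y ∨ artin i y = y) :
    Cyc e (artin i (s * y)) (s * y) ∨ artin i (s * y) = s * y := by
  rw [map_mul, hs]
  refine h.imp (fun h => ?_) (congrArg _)
  simpa using h.mul_left s

theorem dir_of_artin_eq_self {i : ℕ} {e : FreeGroup ℕ} (he : artin i e = e) :
    dir e ≠ 2 * i + 2 ∧ dir e ≠ 2 * i + 3 ∧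
      (dir e = 2 * i + 1 → dir ((of i)⁻¹ * e) = 2 * i + 3) := by
  have := artinDirs i e
  unfold ArtinDirs at this
  rw [he] at this
  omega

theorem cyc_artin_of_dir {i : ℕ} {e y : FreeGroup ℕ} (he : artin i e = e) (hey : dir e ≠ dir y)
    (hy : 2 * i + 1 ≤ dir y ∧ dir y ≤ 2 * i + 4)
    (hy₁ : dir y = 2 * i + 1 → dir ((of i)⁻¹ * y) ≠ 2 * i + 3)
    (hy₂ : dir y = 2 * i + 4 → dir (of (i + 1) * y) ≠ 2 * i + 2) :
    Cyc e (artin i y) y := by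
  have view_one (h : sbtw (dir e) (dir (artin i y)) (dir y)) : Cyc e (artin i y) y :=
    ⟨1, by simpa only [inv_one, one_mul] using h⟩
  have view_of (h : sbtw (dir ((of i)⁻¹ * e)) (dir ((of i)⁻¹ * artin i y)) (dir ((of i)⁻¹ * y))) :
      Cyc e (artin i y) y := ⟨of i, h⟩
  obtain ⟨he_inv, he_succ, he_of⟩ := dir_of_artin_eq_self he
  rw [sbtw_nat_iff] at view_one view_of
  rcases artinDirs i y with ⟨h, -, hr⟩ | ⟨h, hq, hr⟩ | ⟨h, hq, hr⟩ | ⟨h, -, -⟩ | ⟨h, -, -⟩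
  · rw [h] at hey
    have hy₁' := hy₁ h
    have hy' := dir_inv_of_mul_ne h
    rw [dir_inv_of_mul hey, hr] at view_of
    exact view_of (by omega)
  · rw [h] at hey view_one
    by_cases hdir : dir e = 2 * i + 1
    · rw [he_of hdir, hr, dir_inv_of_mul (by omega)] at view_of
      exact view_of (by omega)
    · exact view_one (by omega)
  · rw [h] at hey view_one
    by_cases hdir : dir e = 2 * i + 1
    · rw [he_of hdir, dir_inv_of_mul (g := y) (by omega)] at view_of
      exact view_of (by omega)
    · exact view_one (by omega)
  · have hq : dir (artin i y) = 2 * i + 2 ∨ dir (artin i y) = 2 * i + 3 := by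
      have hy' := hy₂ h
      have hne := dir_of_mul_ne (i := i + 1) h
      have hdirs := artinDirs i (of (i + 1) * y)
      rw [map_mul, artin_of_succ, inv_mul_cancel_left] at hdirs
      unfold ArtinDirs at hdirs
      omega
    exact view_one (by omega)
  · omega

/-- Fixed prefixes are stripped off `y`, moving the reference point `e` along, until
`cyc_artin_of_dir` applies. -/
theorem cyc_artin_or_eq_of_fixed (i : ℕ) {e y : FreeGroup ℕ} (he : artin i e = e)
    (hey : dir e ≠ dir y ∨ y = 1) : Cyc e (artin i y) y ∨ artin i y = y := by
  induction hk : y.norm using Nat.strong_induction_on generalizing e y with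
  | h k ih =>
    subst hk
    have strip (s : FreeGroup ℕ) (hs : artin i s = s) (hnorm : (s⁻¹ * y).norm < y.norm)
        (hdir : dir (s⁻¹ * e) ≠ dir (s⁻¹ * y)) : Cyc e (artin i y) y ∨ artin i y = y := by
      have := ih _ hnorm (by rw [map_mul, map_inv, hs, he]) (.inl hdir) rfl
      simpa using cyc_artin_of_mul hs this
    rcases dir_cases y with rfl | ⟨j, hj⟩
    · exact .inr (map_one _)
    have hey : dir e ≠ dir y := hey.elim id (by rintro rfl; simp at hj)
    by_cases hi : dir y = 2 * i + 1 ∧ dir ((of i)⁻¹ * y) = 2 * i + 3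
    · obtain ⟨hy₁, hy₂⟩ := hi
      have h₁ := norm_inv_of_mul_of_dir_eq hy₁
      have h₂ := norm_inv_of_mul_of_dir_eq (i := i + 1) hy₂
      refine strip (of i * of (i + 1)) (by simp) ?_ ?_ <;> rw [mul_inv_rev, mul_assoc]
      · omega
      · rw [mul_assoc]
        exact dir_inv_of_mul_ne_of_dir_ne (dir_inv_of_mul_ne_of_dir_ne hey hy₁) hy₂
    by_cases hi' : dir y = 2 * i + 4 ∧ dir (of (i + 1) * y) = 2 * i + 2
    · obtain ⟨hy₁, hy₂⟩ := hi'
      have h₁ := norm_of_mul_of_dir_eq (i := i + 1) hy₁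
      have h₂ := norm_of_mul_of_dir_eq hy₂
      refine strip (of i * of (i + 1))⁻¹ (by simp) ?_ ?_ <;> rw [inv_inv, mul_assoc]
      · omega
      · rw [mul_assoc]
        exact dir_of_mul_ne_of_dir_ne (dir_of_mul_ne_of_dir_ne (i := i + 1) hey hy₁) hy₂
    by_cases hy : 2 * i + 1 ≤ dir y ∧ dir y ≤ 2 * i + 4
    · exact .inl (cyc_artin_of_dir he hey hy (not_and.1 hi) (not_and.1 hi'))
    have hfix : artin i (of j) = of j := artin_of_of_ne (by omega) (by omega)
    rcases hj with hj | hj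
    · refine strip (of j) hfix ?_ (dir_inv_of_mul_ne_of_dir_ne hey hj)
      linarith [norm_inv_of_mul_of_dir_eq hj]
    · refine strip (of j)⁻¹ (by rw [map_inv, hfix]) ?_ ?_ <;> rw [inv_inv]
      · linarith [norm_of_mul_of_dir_eq hj]
      · exact dir_of_mul_ne_of_dir_ne hey hj

theorem cyc_one_artin_or_eq (i : ℕ) (y : FreeGroup ℕ) :
    Cyc 1 (artin i y) y ∨ artin i y = y := by
  refine cyc_artin_or_eq_of_fixed i (map_one _) ?_
  rw [dir_one, ne_comm, ne_eq, dir_eq_zero]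
  exact em' _

end CyclicOrder

/-! ### The Artin action of the braid group -/

theorem mulAut_ext_of {f g : MulAut (FreeGroup ℕ)} (h : ∀ k, f (of k) = g (of k)) : f = g :=
  MulEquiv.toMonoidHom_injective (FreeGroup.ext_hom _ _ h)

theorem artin_commute {i j : ℕ} (hij : i + 2 ≤ j) : artin i * artin j = artin j * artin i := by
  have hi : artin j (of i) = of i := artin_of_of_ne (by omega) (by omega)
  have hi' : artin j (of (i + 1)) = of (i + 1) := artin_of_of_ne (by omega) (by omega)
  have hj : artin i (of j) = of j := artin_of_of_ne (by omega) (by omega)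
  have hj' : artin i (of (j + 1)) = of (j + 1) := artin_of_of_ne (by omega) (by omega)
  refine mulAut_ext_of fun k => ?_
  simp only [MulAut.mul_apply]
  by_cases hk : k = i ∨ k = i + 1 ∨ k = j ∨ k = j + 1
  · rcases hk with rfl | rfl | rfl | rfl <;> simp [*]
  · have hki : artin i (of k) = of k := artin_of_of_ne (by omega) (by omega)
    have hkj : artin j (of k) = of k := artin_of_of_ne (by omega) (by omega)
    rw [hki, hkj, hki]

theorem artin_braid (i : ℕ) :
    artin i * artin (i + 1) * artin i = artin (i + 1) * artin i * artin (i + 1) := by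
  have h₁ : artin (i + 1) (of i) = of i := artin_of_of_ne (by omega) (by omega)
  have h₂ : artin i (of (i + 1 + 1)) = of (i + 1 + 1) := artin_of_of_ne (by omega) (by omega)
  refine mulAut_ext_of fun k => ?_
  simp only [MulAut.mul_apply]
  by_cases hk : k = i ∨ k = i + 1 ∨ k = i + 1 + 1
  · rcases hk with rfl | rfl | rfl <;> simp [h₁, h₂, mul_assoc]
  · have hki : artin i (of k) = of k := artin_of_of_ne (by omega) (by omega)
    have hki' : artin (i + 1) (of k) = of k := artin_of_of_ne (by omega) (by omega)
    simp only [hki, hki']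

theorem lift_artin_eq_one (n : ℕ) (w : FreeGroup ℕ) (hw : w ∈ braidRels n) :
    lift (fun i => if 0 < i ∧ i < n then artin i else 1) w = 1 := by
  rcases hw with ⟨i, j, hi, hij, hj, rfl⟩ | ⟨i, hi, hin, rfl⟩ | ⟨i, hi, rfl⟩
  · have hin : 0 < i ∧ i < n := by omega
    have hjn : 0 < j ∧ j < n := by omega
    simp [hin, hjn, artin_commute hij]
  · have hi' : 0 < i ∧ i < n := by omega
    have hin' : 0 < i + 1 ∧ i + 1 < n := by omega
    simp only [map_mul, map_inv, lift_apply_of, if_pos hi', if_pos hin', artin_braid,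
      mul_inv_cancel]
  · have hi' : ¬ (0 < i ∧ i < n) := by omega
    simp [hi']

/-- Artin's action of the braid group on the free group, in which `σᵢ` acts as `artin i`. -/
def artinAction (n : ℕ) : Braid n →* MulAut (FreeGroup ℕ) :=
  PresentedGroup.toGroup (lift_artin_eq_one n)

theorem artinAction_genσ {n j : ℕ} (hj : 0 < j) (hjn : j < n) :
    artinAction n (genσ n j) = artin j := by
  rw [artinAction, genσ, PresentedGroup.toGroup.of, if_pos ⟨hj, hjn⟩]

theorem genσ_eq_one {n j : ℕ} (h : j = 0 ∨ n ≤ j) : genσ n j = 1 :=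
  PresentedGroup.one_of_mem (.inr (.inr ⟨j, h, rfl⟩))

theorem genσ_commute {n i j : ℕ} (hij : i + 2 ≤ j) : Commute (genσ n i) (genσ n j) := by
  rcases Nat.eq_zero_or_pos i with rfl | hi
  · rw [genσ_eq_one (.inl rfl)]
    exact Commute.one_left _
  rcases le_or_gt n j with hj | hj
  · rw [genσ_eq_one (.inr hj)]
    exact Commute.one_right _
  have : genσ n i * genσ n j * (genσ n i)⁻¹ * (genσ n j)⁻¹ = 1 :=
    PresentedGroup.one_of_mem (.inl ⟨i, j, hi, hij, by omega, rfl⟩)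
  rwa [mul_inv_eq_one, mul_inv_eq_iff_eq_mul] at this

theorem genσ_braid {n i : ℕ} (hi : 0 < i) (hin : i + 1 < n) :
    genσ n i * genσ n (i + 1) * genσ n i = genσ n (i + 1) * genσ n i * genσ n (i + 1) := by
  have : genσ n i * genσ n (i + 1) * genσ n i *
      (genσ n (i + 1) * genσ n i * genσ n (i + 1))⁻¹ = 1 :=
    PresentedGroup.one_of_mem (.inr (.inl ⟨i, hi, by omega, rfl⟩))
  rwa [mul_inv_eq_one] at this

theorem genσ_ne_one {n j : ℕ} (hj : 0 < j) (hjn : j < n) : genσ n j ≠ 1 := by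
  intro h
  have := artinAction_genσ hj hjn
  rw [h, map_one] at this
  have := DFunLike.congr_fun this (of (j + 1))
  rw [artin_of_succ, MulAut.one_apply] at this
  exact absurd (of_injective this) (by omega)

/-- The braids involving only the strands after the `r`-th one: the subgroup generated by the `σⱼ`
with `j > r`. -/
def upper (n r : ℕ) : Subgroup (Braid n) :=
  Subgroup.closure (genσ n '' Set.Ioo r n)

theorem genσ_mem_upper {n r j : ℕ} (hj : r < j) : genσ n j ∈ upper n r := by
  by_cases hjn : j < n
  · exact Subgroup.subset_closure ⟨j, ⟨hj, hjn⟩, rfl⟩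
  · rw [genσ_eq_one (.inr (by omega))]
    exact one_mem _

theorem upper_zero (n : ℕ) : upper n 0 = ⊤ := by
  rw [eq_top_iff, ← PresentedGroup.closure_range_of, Subgroup.closure_le]
  rintro _ ⟨j, rfl⟩
  change genσ n j ∈ upper n 0
  rcases Nat.eq_zero_or_pos j with rfl | hj
  · rw [genσ_eq_one (.inl rfl)]
    exact one_mem _
  · exact genσ_mem_upper hj

theorem upper_eq_bot {n r : ℕ} (h : n ≤ r + 1) : upper n r = ⊥ := by
  have hempty : Set.Ioo r n = ∅ := Set.eq_empty_of_forall_notMem fun j hj => by grind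
  rw [upper, hempty, Set.image_empty, Subgroup.closure_empty]

theorem artinAction_apply_eq_self {n r : ℕ} {z : FreeGroup ℕ}
    (hz : ∀ j, r < j → j < n → artin j z = z) {g : Braid n} (hg : g ∈ upper n r) :
    artinAction n g z = z := by
  induction hg using Subgroup.closure_induction with
  | mem _ h =>
    obtain ⟨j, ⟨hj, hjn⟩, rfl⟩ := h
    rw [artinAction_genσ (by omega) hjn, hz j hj hjn]
  | one => simp
  | mul g h _ _ ihg ihh => rw [map_mul, MulAut.mul_apply, ihh, ihg]
  | inv g _ ih => rw [map_inv, MulAut.inv_apply, MulEquiv.symm_apply_eq, ih]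

theorem artinAction_mem_cycAut {n : ℕ} (g : Braid n) : artinAction n g ∈ cycAut := by
  have hg : g ∈ upper n 0 := upper_zero n ▸ Subgroup.mem_top g
  suffices upper n 0 ≤ cycAut.comap (artinAction n) from this hg
  rw [upper, Subgroup.closure_le]
  rintro _ ⟨j, ⟨hj, hjn⟩, rfl⟩
  rw [SetLike.mem_coe, Subgroup.mem_comap, artinAction_genσ hj hjn]
  exact artin_mem_cycAut j

theorem cyc_one_artinAction_conj_or_eq {n j : ℕ} (hj : 0 < j) (hjn : j < n) (g : Braid n)
    (y : FreeGroup ℕ) :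
    Cyc 1 (artinAction n (g * genσ n j * g⁻¹) y) y ∨
      artinAction n (g * genσ n j * g⁻¹) y = y := by
  obtain ⟨y, rfl⟩ := (artinAction n g).surjective y
  have hconj : artinAction n (g * genσ n j * g⁻¹) (artinAction n g y) =
      artinAction n g (artin j y) := by
    simp [artinAction_genσ hj hjn, MulAut.mul_apply]
  rw [hconj]
  refine (cyc_one_artin_or_eq j y).imp (fun h => ?_) (congrArg _)
  simpa using (artinAction_mem_cycAut g 1 _ _).2 h

/-- The endomorphism of the free group killing the generators up to the `r`-th one. -/
def truncate (r : ℕ) : FreeGroup ℕ →* FreeGroup ℕ := lift fun k => if r < k then of k else 1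

theorem truncate_of_lt {r k : ℕ} (h : r < k) : truncate r (of k) = of k := by
  simp [truncate, h]

theorem truncate_of_le {r k : ℕ} (h : k ≤ r) : truncate r (of k) = 1 := by
  simp [truncate, h]

theorem norm_truncate_le (r : ℕ) (g : FreeGroup ℕ) : (truncate r g).norm ≤ g.norm := by
  have truncate_of_norm (k : ℕ) : (truncate r (of k)).norm ≤ 1 := by
    by_cases hk : r < k
    · simp [truncate_of_lt hk]
    · simp [truncate_of_le (not_lt.1 hk)]
  induction g using reduced_induction with
  | one => simp
  | of_mul k g hg ih =>
    rw [norm_of_mul hg, map_mul]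
    linarith [norm_mul_le (truncate r (of k)) (truncate r g), truncate_of_norm k]
  | inv_of_mul k g hg ih =>
    rw [norm_inv_of_mul hg, map_mul, map_inv]
    have := norm_mul_le (truncate r (of k))⁻¹ (truncate r g)
    rw [norm_inv_eq] at this
    linarith [truncate_of_norm k]

theorem dir_of_truncate_eq {r : ℕ} {y : FreeGroup ℕ} (hy : truncate r y = y) (hy' : y ≠ 1) :
    2 * r + 3 ≤ dir y := by
  by_contra h
  rcases dir_cases y with rfl | ⟨k, hk | hk⟩
  · exact hy' rfl
  · have hlt := norm_inv_of_mul_of_dir_eq hk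
    have hle := norm_truncate_le r ((of k)⁻¹ * y)
    rw [map_mul, map_inv, truncate_of_le (by omega), hy, inv_one, one_mul] at hle
    omega
  · have hlt := norm_of_mul_of_dir_eq hk
    have hle := norm_truncate_le r (of k * y)
    rw [map_mul, truncate_of_le (by omega), hy, one_mul] at hle
    omega

theorem truncate_artin {r j : ℕ} (hj : r < j) (z : FreeGroup ℕ) :
    truncate r (artin j z) = artin j (truncate r z) := by
  suffices (truncate r).comp (artin j).toMonoidHom = (artin j).toMonoidHom.comp (truncate r) from
    DFunLike.congr_fun this z
  ext k
  simp only [MonoidHom.comp_apply, MulEquiv.coe_toMonoidHom]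
  rcases le_or_gt k r with hk | hk
  · rw [artin_of_of_ne (by omega) (by omega), truncate_of_le hk, map_one]
  · rw [truncate_of_lt hk, artin_of]
    split_ifs <;> simp [truncate_of_lt, hj, hk, Nat.lt_succ_of_lt hj]

theorem truncate_artinAction {n r : ℕ} {g : Braid n} (hg : g ∈ upper n r) (z : FreeGroup ℕ) :
    truncate r (artinAction n g z) = artinAction n g (truncate r z) := by
  induction hg using Subgroup.closure_induction generalizing z with
  | mem _ h =>
    obtain ⟨j, ⟨hj, hjn⟩, rfl⟩ := h
    rw [artinAction_genσ (by omega) hjn, truncate_artin hj]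
  | one => simp
  | mul g h _ _ ihg ihh => simp only [map_mul, MulAut.mul_apply, ihg, ihh]
  | inv g _ ih =>
    obtain ⟨z, rfl⟩ := (artinAction n g).surjective z
    rw [ih]
    simp

theorem dir_artinAction_conj {n r j : ℕ} (hj : 0 < j) (hjn : j < n) {g : Braid n}
    (hg : g * genσ n j * g⁻¹ ∈ upper n r)
    (hne : artinAction n (g * genσ n j * g⁻¹) (of (r + 1)) ≠ of (r + 1)) :
    dir (artinAction n (g * genσ n j * g⁻¹) (of (r + 1))) = 2 * (r + 1) + 1 := by
  have hcyc := (cyc_one_artinAction_conj_or_eq hj hjn g (of (r + 1))).resolve_right hne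
  refine le_antisymm (not_lt.1 fun h => not_cyc_of_dir h hcyc) ?_
  apply dir_of_truncate_eq
  · rw [truncate_artinAction hg, truncate_of_lt r.lt_succ_self]
  · simp

/-! ### The stabilizer of a generator -/

open Classical in
/-- In the permutation representation on `G × Bool` where `of a` swaps `(1, false)` and `(1, true)`
and the other generators act on `G` through `f`, an element commuting with `of a` preserves
`{(1, false), (1, true)}`. -/
theorem map_eq_one_of_commute_of {α G : Type*} [Group G] (f : FreeGroup α →* G) {a : α}
    (ha : f (of a) = 1) {d : FreeGroup α} (hd : Commute d (of a)) : f d = 1 := by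
  let swapOne : Equiv.Perm (G × Bool) := Equiv.swap (1, false) (1, true)
  let ρ : FreeGroup α →* Equiv.Perm (G × Bool) :=
    lift fun k => if k = a then swapOne else (Equiv.mulLeft (f (of k))).prodCongr (Equiv.refl Bool)
  have ρ_fst (w : FreeGroup α) : ∀ p, (ρ w p).1 = f w * p.1 := by
    induction w using FreeGroup.induction_on with
    | C1 => simp
    | of k =>
      intro p
      by_cases hk : k = a
      · subst hk
        simp only [ρ, lift_apply_of, if_true, ha, one_mul, swapOne, Equiv.swap_apply_def]
        split_ifs with h h' <;> simp [*]
      · simp [ρ, hk]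
    | inv_of k ih =>
      intro p
      rw [map_inv, map_inv, eq_inv_mul_iff_mul_eq, ← ih]
      simp
    | mul u v ihu ihv => simp [ihu, ihv, mul_assoc]
  have hswap : ρ d * swapOne * (ρ d)⁻¹ = swapOne := by
    have : ρ (of a) = swapOne := by simp [ρ]
    rw [← this, ← map_mul, ← map_inv, ← map_mul, hd.eq, mul_inv_cancel_right]
  have hmove : swapOne (ρ d (1, false)) ≠ ρ d (1, false) := by
    rw [← hswap]
    simp [swapOne]
  have := (Equiv.swap_apply_ne_self_iff.1 hmove).2
  have hfst := ρ_fst d (1, false)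
  rcases this with h | h <;> simpa [h] using hfst.symm

/-- The ordered product `yₐ yₐ₊₁ ⋯ y_{b-1}`. -/
def icoProd {M : Type*} [Monoid M] (y : ℕ → M) (a b : ℕ) : M := ((List.Ico a b).map y).prod

section IcoProd

variable {M : Type*} [Monoid M] (y : ℕ → M)

@[simp] theorem icoProd_self (a : ℕ) : icoProd y a a = 1 := by
  simp [icoProd]

theorem icoProd_succ {a b : ℕ} (h : a ≤ b) : icoProd y a (b + 1) = icoProd y a b * y b := by
  simp [icoProd, List.Ico.succ_top h]

theorem icoProd_eq_mul {a b : ℕ} (h : a < b) : icoProd y a b = y a * icoProd y (a + 1) b := by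
  simp [icoProd, List.Ico.eq_cons h]

theorem icoProd_mul_icoProd {a b c : ℕ} (hab : a ≤ b) (hbc : b ≤ c) :
    icoProd y a b * icoProd y b c = icoProd y a c := by
  rw [icoProd, icoProd, ← List.prod_append, ← List.map_append, List.Ico.append_consecutive hab hbc,
    icoProd]

variable {y}

theorem map_icoProd {N F : Type*} [Monoid N] [FunLike F M N] [MonoidHomClass F M N] (f : F)
    (a b : ℕ) : f (icoProd y a b) = icoProd (fun i => f (y i)) a b := by
  rw [icoProd, map_list_prod, List.map_map]
  rfl

theorem icoProd_congr {z : ℕ → M} {a b : ℕ} (h : ∀ i, a ≤ i → i < b → y i = z i) :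
    icoProd y a b = icoProd z a b := by
  unfold icoProd
  congr 1
  exact List.map_congr_left fun i hi => h i (List.Ico.mem.1 hi).1 (List.Ico.mem.1 hi).2

end IcoProd

/-- The braid `σᵢ σᵢ₊₁ ⋯ σₖ₋₁`, moving one strand from position `i` to position `k`. -/
def run (n i k : ℕ) : Braid n := icoProd (genσ n) i k

theorem run_self (n i : ℕ) : run n i i = 1 :=
  icoProd_self _ i

theorem run_succ {n i k : ℕ} (h : i ≤ k) : run n i (k + 1) = run n i k * genσ n k :=
  icoProd_succ _ h

theorem run_eq_mul {n i k : ℕ} (h : i < k) : run n i k = genσ n i * run n (i + 1) k :=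
  icoProd_eq_mul _ h

theorem run_mem_upper {n r i k : ℕ} (h : r < i) : run n i k ∈ upper n r := by
  refine list_prod_mem fun g hg => ?_
  obtain ⟨j, hj, rfl⟩ := List.mem_map.1 hg
  exact genσ_mem_upper (h.trans_le (List.Ico.mem.1 hj).1)

theorem run_commute_genσ {n i j k : ℕ} (h : k < j) : Commute (run n i k) (genσ n j) := by
  refine Commute.list_prod_left _ _ fun g hg => ?_
  obtain ⟨l, hl, rfl⟩ := List.mem_map.1 hg
  have := (List.Ico.mem.1 hl).2
  exact genσ_commute (by omega)

theorem run_semiconjBy {n i j k : ℕ} (hi : 0 < i) (hij : i ≤ j) (hjk : j + 1 < k)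
    (hjn : j + 1 < n) : SemiconjBy (run n i k) (genσ n j) (genσ n (j + 1)) := by
  induction k, hjk using Nat.le_induction with
  | base =>
    rw [run_succ (by omega), run_succ hij, mul_assoc]
    have hbraid : SemiconjBy (genσ n j * genσ n (j + 1)) (genσ n j) (genσ n (j + 1)) := by
      rw [SemiconjBy, genσ_braid (by omega) hjn, mul_assoc]
    exact SemiconjBy.mul_left (run_commute_genσ (by omega)) hbraid
  | succ k hk ih =>
    rw [run_succ (by omega)]
    exact ih.mul_left (genσ_commute (by omega)).symm

theorem mul_sq_mul_inv_of_braid {G : Type*} [Group G] {s t : G} (h : s * t * s = t * s * t) :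
    s * t ^ 2 * s⁻¹ = t⁻¹ * s ^ 2 * t := by
  rw [mul_inv_eq_iff_eq_mul, mul_assoc, mul_assoc, eq_inv_mul_iff_mul_eq, ← mul_assoc (s ^ 2)]
  calc t * (s * t ^ 2) = t * s * t * t := by simp only [pow_two, mul_assoc]
    _ = s * t * s * t := by rw [h]
    _ = s * (t * s * t) := by simp only [mul_assoc]
    _ = s * (s * t * s) := by rw [h]
    _ = s ^ 2 * t * s := by simp only [pow_two, mul_assoc]

theorem sq_typeB_relation {G : Type*} [Group G] {s t : G} (h : s * t * s = t * s * t) :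
    t * s ^ 2 * t * s ^ 2 = s ^ 2 * t * s ^ 2 * t := by
  calc t * s ^ 2 * t * s ^ 2 = t * s * (s * t * s) * s := by simp only [pow_two, mul_assoc]
    _ = t * s * (t * s * t) * s := by rw [h]
    _ = (t * s * t) * (s * t * s) := by simp only [mul_assoc]
    _ = (s * t * s) * (t * s * t) := by rw [h]
    _ = s * (t * s * t) * s * t := by simp only [mul_assoc]
    _ = s * (s * t * s) * s * t := by rw [h]
    _ = s ^ 2 * t * s ^ 2 * t := by simp only [pow_two, mul_assoc]

/-- `s a s a = a s a s` is the relation of length four in the braid groups of type `B`; it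
propagates along the Dynkin diagram. -/
theorem typeB_relation_conj {G : Type*} [Group G] {a s t : G} (hta : Commute t a)
    (hst : s * t * s = t * s * t) (hsa : s * a * s * a = a * s * a * s) :
    t * (s⁻¹ * a * s) * t * (s⁻¹ * a * s) = s⁻¹ * a * s * t * (s⁻¹ * a * s) * t := by
  have hst₁ : s * t * s⁻¹ = t⁻¹ * s * t := by
    rw [mul_inv_eq_iff_eq_mul, mul_assoc, mul_assoc, ← mul_assoc s, hst]
    group
  have hst₂ : t * s⁻¹ * t⁻¹ = s⁻¹ * t⁻¹ * s := by
    rw [mul_inv_eq_iff_eq_mul, mul_assoc, mul_assoc, eq_inv_mul_iff_mul_eq, eq_inv_mul_iff_mul_eq]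
    simp only [← mul_assoc, ← hst]
    group
  calc t * (s⁻¹ * a * s) * t * (s⁻¹ * a * s)
      = t * s⁻¹ * a * (s * t * s⁻¹) * a * s := by group
    _ = t * s⁻¹ * (a * t⁻¹) * s * (t * a) * s := by rw [hst₁]; group
    _ = t * s⁻¹ * t⁻¹ * (a * s * a) * t * s := by
      rw [hta.symm.inv_right.eq, hta.eq]; group
    _ = s⁻¹ * t⁻¹ * (s * a * s * a) * t * s := by rw [hst₂]; group
    _ = s⁻¹ * t⁻¹ * (a * s * a) * (s * t * s) := by rw [hsa]; group
    _ = s⁻¹ * (t⁻¹ * a) * s * (a * t) * s * t := by rw [hst]; group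
    _ = s⁻¹ * a * (t⁻¹ * s * t) * a * s * t := by
      rw [hta.inv_left.eq, ← hta.eq]; group
    _ = s⁻¹ * a * s * t * (s⁻¹ * a * s) * t := by rw [← hst₁]; group

/-- The pure braid winding the strand `p` once around the strand `k + 1`. -/
def pureGen (n p k : ℕ) : Braid n := run n p k * genσ n k ^ 2 * (run n p k)⁻¹

theorem pureGen_self (n p : ℕ) : pureGen n p p = genσ n p ^ 2 := by
  simp [pureGen, run_self]

theorem pureGen_eq_one {n p k : ℕ} (hk : n ≤ k) : pureGen n p k = 1 := by
  simp [pureGen, genσ_eq_one (.inr hk)]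

theorem pureGen_succ {n p k : ℕ} (hp : 0 < p) (hpk : p ≤ k) (hk : k + 1 < n) :
    pureGen n p (k + 1) = (genσ n (k + 1))⁻¹ * pureGen n p k * genσ n (k + 1) := by
  have hcomm : Commute (run n p k) (genσ n (k + 1)) := run_commute_genσ k.lt_succ_self
  rw [pureGen, pureGen, run_succ hpk]
  calc run n p k * genσ n k * genσ n (k + 1) ^ 2 * (run n p k * genσ n k)⁻¹
      = run n p k * (genσ n k * genσ n (k + 1) ^ 2 * (genσ n k)⁻¹) * (run n p k)⁻¹ := by group
    _ = run n p k * (genσ n (k + 1))⁻¹ * genσ n k ^ 2 * (genσ n (k + 1) * (run n p k)⁻¹) := by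
      rw [mul_sq_mul_inv_of_braid (genσ_braid (by omega) hk)]; group
    _ = (genσ n (k + 1))⁻¹ * (run n p k * genσ n k ^ 2 * (run n p k)⁻¹) * genσ n (k + 1) := by
      rw [hcomm.inv_right.eq, hcomm.symm.inv_right.eq]; group

theorem genσ_commute_pureGen {n p j k : ℕ} (hp : 0 < p) (hj : p < j) (hjk : j ≠ k)
    (hjk' : j ≠ k + 1) : Commute (genσ n j) (pureGen n p k) := by
  rcases le_or_gt n k with hkn | hkn
  · rw [pureGen_eq_one hkn]
    exact Commute.one_right _
  rcases hjk.lt_or_gt with hlt | hlt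
  · obtain ⟨j, rfl⟩ : ∃ i, j = i + 1 := ⟨j - 1, by omega⟩
    have hrun : SemiconjBy (run n p k) (genσ n j) (genσ n (j + 1)) :=
      run_semiconjBy hp (by omega) hlt (by omega)
    have hσ : Commute (genσ n j) (genσ n k ^ 2) := (genσ_commute (by omega)).pow_right 2
    exact ((hrun.mul_left hσ.symm).mul_left hrun.inv_symm_left).symm
  · have hrun : Commute (run n p k) (genσ n j) := run_commute_genσ hlt
    have hσ : Commute (genσ n k) (genσ n j) := genσ_commute (by omega)
    exact ((hrun.mul_left (hσ.pow_left 2)).mul_left hrun.inv_left).symm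

theorem genσ_pureGen_relation {n p k : ℕ} (hp : 0 < p) (hpk : p ≤ k) (hk : k + 1 < n) :
    genσ n (k + 1) * pureGen n p k * genσ n (k + 1) * pureGen n p k =
      pureGen n p k * genσ n (k + 1) * pureGen n p k * genσ n (k + 1) := by
  induction k, hpk using Nat.le_induction with
  | base =>
    rw [pureGen_self]
    exact sq_typeB_relation (genσ_braid hp hk)
  | succ k hpk ih =>
    rw [pureGen_succ hp hpk (by omega)]
    exact typeB_relation_conj (genσ_commute_pureGen hp (by omega) (by omega) (by omega))
      (genσ_braid k.succ_pos hk) (ih (by omega))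

/-- The homomorphism from the free group to the braids which move the strand `p` around the later
strands, the others being fixed (the point-pushing map of the punctured disk). The generator `xₖ`
is the loop around the `k`-th puncture; it is sent to `1` if `k ≤ p`. -/
def pointPush (n p : ℕ) : FreeGroup ℕ →* Braid n :=
  lift fun k => if p < k then (pureGen n p (k - 1))⁻¹ else 1

theorem pointPush_of_succ {n p k : ℕ} (h : p ≤ k) :
    pointPush n p (of (k + 1)) = (pureGen n p k)⁻¹ := by
  simp [pointPush, Nat.lt_succ_of_le h]

theorem pointPush_of_le {n p k : ℕ} (h : k ≤ p) : pointPush n p (of k) = 1 := by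
  simp [pointPush, h.not_gt]

theorem pointPush_truncate (n p : ℕ) (z : FreeGroup ℕ) :
    pointPush n p (truncate p z) = pointPush n p z := by
  suffices (pointPush n p).comp (truncate p) = pointPush n p from DFunLike.congr_fun this z
  ext k
  rcases le_or_gt k p with hk | hk
  · simp [truncate_of_le hk, pointPush_of_le hk]
  · simp [truncate_of_lt hk]

theorem inv_conj_of_typeB_relation {G : Type*} [Group G] {a t : G}
    (h : t * a * t * a = a * t * a * t) :
    a⁻¹ * (t⁻¹ * a * t)⁻¹ * (a⁻¹)⁻¹ = t * a⁻¹ * t⁻¹ := by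
  calc a⁻¹ * (t⁻¹ * a * t)⁻¹ * (a⁻¹)⁻¹
      = a⁻¹ * t⁻¹ * a⁻¹ * (t * a * t * a) * a⁻¹ * t⁻¹ := by group
    _ = t * a⁻¹ * t⁻¹ := by rw [h]; group

theorem pointPush_artin {n p j : ℕ} (hp : 0 < p) (hj : p < j) (hjn : j < n) (z : FreeGroup ℕ) :
    pointPush n p (artin j z) = genσ n j * pointPush n p z * (genσ n j)⁻¹ := by
  suffices (pointPush n p).comp (artin j).toMonoidHom =
      (MulAut.conj (genσ n j)).toMonoidHom.comp (pointPush n p) from DFunLike.congr_fun this z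
  ext k
  simp only [MonoidHom.comp_apply, MulEquiv.coe_toMonoidHom, MulAut.conj_apply]
  obtain ⟨j, rfl⟩ : ∃ i, j = i + 1 := ⟨j - 1, by omega⟩
  by_cases hk : k = j + 1
  · rw [hk, artin_of_self, map_mul, map_mul, map_inv, pointPush_of_succ (by omega),
      pointPush_of_succ (by omega), pureGen_succ hp (by omega) hjn]
    exact inv_conj_of_typeB_relation (genσ_pureGen_relation hp (by omega) hjn)
  by_cases hk' : k = j + 1 + 1
  · rw [hk', artin_of_succ, pointPush_of_succ (by omega), pointPush_of_succ (by omega),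
      pureGen_succ hp (by omega) hjn]
    group
  rw [artin_of_of_ne hk hk']
  rcases le_or_gt k p with hkp | hkp
  · simp [pointPush_of_le hkp]
  · obtain ⟨k, rfl⟩ : ∃ i, k = i + 1 := ⟨k - 1, by omega⟩
    have hcomm : Commute (genσ n (j + 1)) (pureGen n p k) :=
      genσ_commute_pureGen hp hj (by omega) (by omega)
    rw [pointPush_of_succ (by omega), hcomm.inv_right.eq, mul_inv_cancel_right]

theorem pointPush_artinAction {n p : ℕ} (hp : 0 < p) {h : Braid n} (hh : h ∈ upper n p)
    (z : FreeGroup ℕ) : pointPush n p (artinAction n h z) = h * pointPush n p z * h⁻¹ := by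
  induction hh using Subgroup.closure_induction generalizing z with
  | mem _ h =>
    obtain ⟨j, ⟨hj, hjn⟩, rfl⟩ := h
    rw [artinAction_genσ (by omega) hjn, pointPush_artin hp hj hjn]
  | one => simp
  | mul g h _ _ ihg ihh => rw [map_mul, MulAut.mul_apply, ihg, ihh]; group
  | inv g _ ih =>
    obtain ⟨z, rfl⟩ := (artinAction n g).surjective z
    rw [ih, map_inv, MulAut.inv_apply_self]
    group

theorem exists_run_mul_genσ_eq {n r j k : ℕ} (hj : r < j) (hjn : j < n) (hk : r < k)
    (hkn : k ≤ n) :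
    ∃ z, ∃ h ∈ upper n (r + 1), ∃ l, r < l ∧ l ≤ n ∧
      run n (r + 1) k * genσ n j = pointPush n (r + 1) z * h * run n (r + 1) l := by
  rcases lt_trichotomy k j with hkj | rfl | hkj
  · refine ⟨1, genσ n j, genσ_mem_upper (by omega), k, hk, hkn, ?_⟩
    rw [map_one, one_mul, (run_commute_genσ hkj).eq]
  · exact ⟨1, 1, one_mem _, k + 1, by omega, hjn, by simp [run_succ hk]⟩
  obtain rfl | hjk : k = j + 1 ∨ j + 1 < k := by omega
  · refine ⟨(of (j + 1))⁻¹, 1, one_mem _, j, hj, hjn.le, ?_⟩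
    rw [map_inv, pointPush_of_succ hj, pureGen, run_succ hj, inv_inv, mul_one]
    simp only [pow_two, mul_assoc, inv_mul_cancel, mul_one]
  · refine ⟨1, genσ n (j + 1), genσ_mem_upper (by omega), k, hk, hkn, ?_⟩
    rw [map_one, one_mul]
    exact run_semiconjBy r.succ_pos hj hjk (by omega)

theorem exists_run_mul_inv_genσ_eq {n r j k : ℕ} (hj : r < j) (hjn : j < n) (hk : r < k)
    (hkn : k ≤ n) :
    ∃ z, ∃ h ∈ upper n (r + 1), ∃ l, r < l ∧ l ≤ n ∧
      run n (r + 1) k * (genσ n j)⁻¹ = pointPush n (r + 1) z * h * run n (r + 1) l := by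
  rcases lt_trichotomy k j with hkj | rfl | hkj
  · refine ⟨1, (genσ n j)⁻¹, inv_mem (genσ_mem_upper (by omega)), k, hk, hkn, ?_⟩
    rw [map_one, one_mul, (run_commute_genσ hkj).inv_right.eq]
  · refine ⟨of (k + 1), 1, one_mem _, k + 1, by omega, hjn, ?_⟩
    rw [pointPush_of_succ hk, pureGen, run_succ hk, mul_one]
    simp only [pow_two, mul_inv_rev, inv_inv, mul_assoc, inv_mul_cancel_left, inv_mul_cancel,
      mul_one]
  obtain rfl | hjk : k = j + 1 ∨ j + 1 < k := by omega
  · exact ⟨1, 1, one_mem _, j, hj, hjn.le, by simp [run_succ hj]⟩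
  · refine ⟨1, (genσ n (j + 1))⁻¹, inv_mem (genσ_mem_upper (by omega)), k, hk, hkn, ?_⟩
    rw [map_one, one_mul]
    exact (run_semiconjBy r.succ_pos hj hjk (by omega)).inv_right

theorem exists_combing {n r : ℕ} (hr : r < n) {g : Braid n} (hg : g ∈ upper n r) :
    ∃ z, ∃ h ∈ upper n (r + 1), ∃ k, r < k ∧ k ≤ n ∧
      g = pointPush n (r + 1) z * h * run n (r + 1) k := by
  have hstep {z h k u} (hh : h ∈ upper n (r + 1))
      (hu : ∃ z, ∃ h ∈ upper n (r + 1), ∃ l, r < l ∧ l ≤ n ∧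
        run n (r + 1) k * u = pointPush n (r + 1) z * h * run n (r + 1) l) :
      ∃ z', ∃ h' ∈ upper n (r + 1), ∃ l, r < l ∧ l ≤ n ∧
        pointPush n (r + 1) z * h * run n (r + 1) k * u =
          pointPush n (r + 1) z' * h' * run n (r + 1) l := by
    obtain ⟨z', h', hh', l, hl, hln, hu⟩ := hu
    refine ⟨z * artinAction n h z', h * h', mul_mem hh hh', l, hl, hln, ?_⟩
    rw [mul_assoc _ _ u, hu, map_mul, pointPush_artinAction r.succ_pos hh]
    group
  induction hg using Subgroup.closure_induction_right with
  | one => exact ⟨1, 1, one_mem _, r + 1, r.lt_succ_self, hr, by simp [run_self]⟩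
  | mul_right g _ _ hx ih =>
    obtain ⟨j, ⟨hj, hjn⟩, rfl⟩ := hx
    obtain ⟨z, h, hh, k, hk, hkn, rfl⟩ := ih
    exact hstep hh (exists_run_mul_genσ_eq hj hjn hk hkn)
  | mul_inv_cancel g _ _ hx ih =>
    obtain ⟨j, ⟨hj, hjn⟩, rfl⟩ := hx
    obtain ⟨z, h, hh, k, hk, hkn, rfl⟩ := ih
    exact hstep hh (exists_run_mul_inv_genσ_eq hj hjn hk hkn)

/-- The braids `g` acting trivially on the quotient of the free group by the first `p` generators
and by a conjugation on `xₚ`, the conjugator `d` determining `g`. -/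
def pushSubgroup (n p : ℕ) : Subgroup (Braid n) where
  carrier := {g | (∀ y, truncate p (artinAction n g y) = truncate p y) ∧
    ∃ d, artinAction n g (of p) = d * of p * d⁻¹ ∧ pointPush n p d = g⁻¹}
  one_mem' := ⟨by simp, 1, by simp, by simp⟩
  mul_mem' := by
    rintro g g' ⟨hg, d, hd, hdg⟩ ⟨hg', d', hd', hdg'⟩
    refine ⟨fun y => by rw [map_mul, MulAut.mul_apply, hg, hg'], artinAction n g d' * d, ?_, ?_⟩
    · simp [MulAut.mul_apply, hd', hd, mul_assoc]
    · rw [map_mul, ← pointPush_truncate, hg, pointPush_truncate, hdg, hdg', mul_inv_rev]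
  inv_mem' := by
    rintro g ⟨hg, d, hd, hdg⟩
    have hg' (y : FreeGroup ℕ) : truncate p (artinAction n g⁻¹ y) = truncate p y := by
      rw [← hg, map_inv, MulAut.apply_inv_self]
    refine ⟨hg', artinAction n g⁻¹ d⁻¹, ?_, ?_⟩
    · apply (artinAction n g).injective
      simp [hd, mul_assoc]
    · rw [← pointPush_truncate, hg', pointPush_truncate, map_inv, hdg]

theorem sq_genσ_mem_pushSubgroup {n p : ℕ} (hp : 0 < p) (hpn : p < n) :
    genσ n p ^ 2 ∈ pushSubgroup n p := by
  have hact (y : FreeGroup ℕ) : artinAction n (genσ n p ^ 2) y = artin p (artin p y) := by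
    rw [pow_two, map_mul, MulAut.mul_apply, artinAction_genσ hp hpn]
  refine ⟨fun y => ?_, of p * of (p + 1), ?_, ?_⟩
  · suffices ((truncate p).comp (artin p).toMonoidHom).comp (artin p).toMonoidHom = truncate p from
      hact y ▸ DFunLike.congr_fun this y
    ext k
    by_cases hk : k = p
    · simp [hk, truncate_of_le]
    by_cases hk' : k = p + 1
    · simp [hk', truncate_of_le]
    · simp [artin_of_of_ne hk hk']
  · rw [hact]
    simp [mul_assoc]
  · rw [map_mul, pointPush_of_le le_rfl, pointPush_of_succ le_rfl, one_mul, pureGen_self]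

theorem conj_mem_pushSubgroup {n p : ℕ} (hp : 0 < p) {g h : Braid n} (hg : g ∈ pushSubgroup n p)
    (hh : h ∈ upper n p) : h * g * h⁻¹ ∈ pushSubgroup n p := by
  obtain ⟨hg, d, hd, hdg⟩ := hg
  have hfix : artinAction n h⁻¹ (of p) = of p := artinAction_apply_eq_self
    (fun j hj _ => artin_of_of_ne (by omega) (by omega)) (inv_mem hh)
  have hfix' : artinAction n h (of p) = of p := artinAction_apply_eq_self
    (fun j hj _ => artin_of_of_ne (by omega) (by omega)) hh
  refine ⟨fun y => ?_, artinAction n h d, ?_, ?_⟩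
  · simp only [map_mul, MulAut.mul_apply]
    rw [truncate_artinAction hh, hg, ← truncate_artinAction hh, map_inv, MulAut.apply_inv_self]
  · simp only [map_mul, map_inv, MulAut.mul_apply] at hfix ⊢
    rw [hfix, hd]
    simp [hfix']
  · rw [pointPush_artinAction hp hh, hdg]
    group

theorem pureGen_mem_pushSubgroup {n p k : ℕ} (hp : 0 < p) (hpk : p ≤ k) :
    pureGen n p k ∈ pushSubgroup n p := by
  rcases le_or_gt n k with hkn | hkn
  · rw [pureGen_eq_one hkn]
    exact one_mem _
  induction k, hpk using Nat.le_induction with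
  | base => exact pureGen_self n p ▸ sq_genσ_mem_pushSubgroup hp hkn
  | succ k hpk ih =>
    have hσ : (genσ n (k + 1))⁻¹ ∈ upper n p := inv_mem (genσ_mem_upper (by omega))
    have := conj_mem_pushSubgroup hp (ih (by omega)) hσ
    rwa [inv_inv, ← pureGen_succ hp hpk hkn] at this

theorem pointPush_mem_pushSubgroup {n p : ℕ} (hp : 0 < p) (z : FreeGroup ℕ) :
    pointPush n p z ∈ pushSubgroup n p := by
  suffices (pointPush n p).range ≤ pushSubgroup n p from this ⟨z, rfl⟩
  refine range_lift_le ?_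
  rintro _ ⟨k, rfl⟩
  dsimp only
  split_ifs with hk
  · exact inv_mem (pureGen_mem_pushSubgroup hp (by omega))
  · exact one_mem _

theorem mem_upper_succ_of_artinAction_eq_self {n r : ℕ} {g : Braid n} (hg : g ∈ upper n r)
    (hfix : artinAction n g (of (r + 1)) = of (r + 1)) : g ∈ upper n (r + 1) := by
  rcases le_or_gt n (r + 1) with hrn | hrn
  · rw [upper_eq_bot hrn, Subgroup.mem_bot] at hg
    exact hg ▸ one_mem _
  have hfix_of {h : Braid n} (hh : h ∈ upper n (r + 1)) :
      artinAction n h (of (r + 1)) = of (r + 1) := artinAction_apply_eq_self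
    (fun j hj _ => artin_of_of_ne (by omega) (by omega)) hh
  obtain ⟨z, h, hh, k, hk, hkn, rfl⟩ := exists_combing (by omega) hg
  obtain ⟨htrunc, d, hd, hdz⟩ := pointPush_mem_pushSubgroup (n := n) r.succ_pos z
  obtain rfl | hk : k = r + 1 ∨ r + 1 < k := by omega
  · rw [run_self, mul_one, map_mul, MulAut.mul_apply, hfix_of hh, hd, mul_inv_eq_iff_eq_mul] at hfix
    have : truncate (r + 1) d = 1 := map_eq_one_of_commute_of _ (truncate_of_le le_rfl) hfix
    rw [← pointPush_truncate, this, map_one, eq_comm, inv_eq_one] at hdz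
    simpa [run_self, hdz] using hh
  · exfalso
    have hrun : run n (r + 1 + 1) k ∈ upper n (r + 1) := run_mem_upper (Nat.lt_succ_self _)
    rw [run_eq_mul hk] at hfix
    simp only [map_mul, MulAut.mul_apply] at hfix
    rw [hfix_of hrun, artinAction_genσ r.succ_pos hrn, artin_of_self] at hfix
    have := congrArg (truncate (r + 1)) hfix
    rw [htrunc, truncate_artinAction hh] at this
    simp [truncate_of_le, truncate_of_lt] at this

/-! ### Reducing the lengths of the images of the generators -/

/-- `y = w xₖ w⁻¹` as a reduced word: `w` ends neither with `xₖ` nor with `xₖ⁻¹`. -/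
structure IsReducedConj (y w : FreeGroup ℕ) (k : ℕ) : Prop where
  eq : y = w * of k * w⁻¹
  dir_ne : dir w⁻¹ ≠ 2 * k + 1
  dir_ne' : dir w⁻¹ ≠ 2 * k + 2

theorem exists_isReducedConj {y : FreeGroup ℕ} {k : ℕ} (h : IsConj (of k) y) :
    ∃ w, IsReducedConj y w k := by
  obtain ⟨c, hc⟩ := isConj_iff.1 h
  let s : Set (FreeGroup ℕ) := {w | y = w * of k * w⁻¹}
  obtain ⟨w, hw, hmin⟩ := exists_minimalFor_of_wellFoundedLT (· ∈ s) FreeGroup.norm ⟨c, hc.symm⟩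
  have hle {w' : FreeGroup ℕ} (hw' : w' ∈ s) : w.norm ≤ w'.norm :=
    (le_total w'.norm w.norm).elim (hmin hw') id
  refine ⟨w, hw, fun hdir => ?_, fun hdir => ?_⟩
  · have hmem : w * of k ∈ s := hw.trans (by group)
    have hlt := norm_inv_of_mul_of_dir_eq hdir
    rw [← mul_inv_rev, norm_inv_eq, norm_inv_eq] at hlt
    have := hle hmem
    omega
  · have hmem : w * (of k)⁻¹ ∈ s := hw.trans (by group)
    have hlt := norm_of_mul_of_dir_eq hdir
    rw [← norm_inv_eq, mul_inv_rev, inv_inv, norm_inv_eq] at hlt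
    have := hle hmem
    omega

theorem norm_conj_of_le (w : FreeGroup ℕ) (k : ℕ) : (w * of k * w⁻¹).norm ≤ 2 * w.norm + 1 := by
  have h₁ := norm_mul_le (w * of k) w⁻¹
  have h₂ := norm_mul_le w (of k)
  rw [norm_inv_eq] at h₁
  rw [norm_of] at h₂
  omega

namespace IsReducedConj

variable {y w y' w' : FreeGroup ℕ} {k k' : ℕ}

theorem norm_mul_of (h : IsReducedConj y w k) : (w * of k).norm = w.norm + 1 := by
  rw [norm_mul_of_dir_ne (by simpa using h.dir_ne), norm_of]

theorem dir_inv_mul_of (h : IsReducedConj y w k) : dir (w * of k)⁻¹ = 2 * k + 2 := by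
  rw [mul_inv_rev, dir_inv_of_mul h.dir_ne]

theorem norm_eq (h : IsReducedConj y w k) : y.norm = 2 * w.norm + 1 := by
  rw [h.eq, norm_mul_of_dir_ne (by rw [h.dir_inv_mul_of]; exact h.dir_ne'.symm), h.norm_mul_of,
    norm_inv_eq]
  ring

theorem dir_eq (h : IsReducedConj y w k) (hw : w ≠ 1) : dir y = dir w := by
  rw [h.eq, mul_assoc, dir_mul_of_dir_ne hw (by rw [dir_of_mul h.dir_ne']; exact h.dir_ne)]

theorem norm_lt_of_dir_inv_mul (h : IsReducedConj y w k) (hdir : dir (w⁻¹ * w') = 2 * k + 2) :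
    w.norm < w'.norm := by
  have hadd := norm_mul_of_dir_ne (u := w) (v := w⁻¹ * w') (by rw [hdir]; exact h.dir_ne')
  have := norm_of_mul_of_dir_eq hdir
  rw [mul_inv_cancel_left] at hadd
  omega

theorem norm_conj_lt (h : IsReducedConj y w k) (h' : IsReducedConj y' w' k')
    (hdir : dir (w⁻¹ * w') = 2 * k + 2) : (y * y' * y⁻¹).norm < y'.norm := by
  have hadd := norm_mul_of_dir_ne (u := w) (v := w⁻¹ * w') (by rw [hdir]; exact h.dir_ne')
  rw [mul_inv_cancel_left] at hadd
  have hlt := norm_of_mul_of_dir_eq hdir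
  have hconj : y * y' * y⁻¹ =
      w * (of k * (w⁻¹ * w')) * of k' * (w * (of k * (w⁻¹ * w')))⁻¹ := by
    rw [h.eq, h'.eq]
    group
  have hle := norm_conj_of_le (w * (of k * (w⁻¹ * w'))) k'
  have := norm_mul_le w (of k * (w⁻¹ * w'))
  rw [hconj, h'.norm_eq]
  omega

theorem norm_lt_of_dir_inv_mul' (h' : IsReducedConj y' w' k')
    (hdir : dir (w'⁻¹ * w) = 2 * k' + 1) : w'.norm < w.norm := by
  have hadd := norm_mul_of_dir_ne (u := w') (v := w'⁻¹ * w) (by rw [hdir]; exact h'.dir_ne)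
  have := norm_inv_of_mul_of_dir_eq hdir
  rw [mul_inv_cancel_left] at hadd
  omega

theorem dir_eq_of_dir_inv_mul (h' : IsReducedConj y' w' k')
    (hdir : dir (w'⁻¹ * w) = 2 * k' + 1) : dir w = dir y' := by
  by_cases hw' : w' = 1
  · rw [h'.eq, hw']
    simpa [hw'] using hdir
  · rw [h'.dir_eq hw', ← dir_mul_of_dir_ne hw' (by rw [hdir]; exact h'.dir_ne),
      mul_inv_cancel_left]

theorem norm_inv_conj_lt (h : IsReducedConj y w k) (h' : IsReducedConj y' w' k')
    (hdir : dir (w'⁻¹ * w) = 2 * k' + 1) : (y'⁻¹ * y * y').norm < y.norm := by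
  have hadd := norm_mul_of_dir_ne (u := w') (v := w'⁻¹ * w) (by rw [hdir]; exact h'.dir_ne)
  rw [mul_inv_cancel_left] at hadd
  have hlt := norm_inv_of_mul_of_dir_eq hdir
  have hconj : y'⁻¹ * y * y' =
      w' * ((of k')⁻¹ * (w'⁻¹ * w)) * of k * (w' * ((of k')⁻¹ * (w'⁻¹ * w)))⁻¹ := by
    rw [h.eq, h'.eq]
    group
  have hle := norm_conj_of_le (w' * ((of k')⁻¹ * (w'⁻¹ * w))) k
  have := norm_mul_le w' ((of k')⁻¹ * (w'⁻¹ * w))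
  rw [hconj, h.norm_eq]
  omega

end IsReducedConj

theorem dir_icoProd_of {a b : ℕ} (h : a < b) : dir (icoProd of a b) = 2 * a + 1 := by
  obtain ⟨n, rfl⟩ : ∃ n, b = n + 1 := ⟨b - 1, by omega⟩
  induction Nat.le_of_lt_succ h using Nat.decreasingInduction with
  | self => simp [icoProd_eq_mul]
  | of_succ a _ ih => rw [icoProd_eq_mul _ (by omega), dir_of_mul (by omega)]

theorem norm_icoProd_of {a b : ℕ} (h : a ≤ b) : (icoProd of a b).norm + a = b := by
  induction h using Nat.decreasingInduction with
  | self => simp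
  | of_succ a h ih =>
    have hdir : dir (icoProd of (a + 1) b) ≠ 2 * a + 2 := by
      rcases (Nat.succ_le_of_lt h).eq_or_lt with rfl | hlt
      · simp
      · rw [dir_icoProd_of hlt]
        omega
    rw [icoProd_eq_mul _ h, norm_of_mul hdir]
    omega

section NoReduction

variable {y w : ℕ → FreeGroup ℕ} {k : ℕ → ℕ}

/-- For `y i` with reduced form `w i * of (k i) * (w i)⁻¹`: the letter between `w i` and its inverse
survives in `y i * y (i + 1)`, and so does the one of `y (i + 1)`. Otherwise conjugating one of the
two by the other makes it shorter. -/
def NoReductionAt (w : ℕ → FreeGroup ℕ) (k : ℕ → ℕ) (i : ℕ) : Prop :=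
  dir ((w i)⁻¹ * w (i + 1)) ≠ 2 * k i + 2 ∧ dir ((w (i + 1))⁻¹ * w i) ≠ 2 * k (i + 1) + 1

theorem le_norm_inv_mul_icoProd (hc : ∀ i, IsReducedConj (y i) (w i) (k i)) {a n : ℕ} (han : a ≤ n)
    (hno : ∀ i, a ≤ i → i < n → NoReductionAt w k i) :
    dir ((w a * of (k a))⁻¹ * icoProd y a (n + 1)) ≠ 2 * k a + 2 ∧
      (w a).norm + n ≤ ((w a * of (k a))⁻¹ * icoProd y a (n + 1)).norm + a := by
  induction han using Nat.decreasingInduction with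
  | self =>
    have : (w n * of (k n))⁻¹ * icoProd y n (n + 1) = (w n)⁻¹ := by
      rw [icoProd_succ _ le_rfl, icoProd_self, (hc n).eq]
      group
    rw [this, norm_inv_eq]
    exact ⟨(hc n).dir_ne', le_rfl⟩
  | of_succ a han ih =>
    obtain ⟨hdir, hnorm⟩ := ih fun i h₁ h₂ => hno i (by omega) h₂
    obtain ⟨hno₁, hno₂⟩ := hno a le_rfl han
    set q := (w (a + 1) * of (k (a + 1)))⁻¹ * icoProd y (a + 1) (n + 1)
    have hprod : (w a * of (k a))⁻¹ * icoProd y a (n + 1) =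
        (w a)⁻¹ * w (a + 1) * (of (k (a + 1)) * q) := by
      rw [icoProd_eq_mul _ (by omega), (hc a).eq]
      simp only [q, mul_assoc, mul_inv_rev, inv_mul_cancel_left, mul_inv_cancel_left]
    have hinv : ((w a)⁻¹ * w (a + 1))⁻¹ = (w (a + 1))⁻¹ * w a := by rw [mul_inv_rev, inv_inv]
    have hred : dir ((w a)⁻¹ * w (a + 1))⁻¹ ≠ dir (of (k (a + 1)) * q) := by
      rwa [dir_of_mul hdir, hinv]
    rw [hprod]
    constructor
    · by_cases hw : (w a)⁻¹ * w (a + 1) = 1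
      · rw [hw, one_mul, dir_of_mul hdir]
        omega
      · rwa [dir_mul_of_dir_ne hw hred]
    · have hle := norm_mul_le (w (a + 1)) ((w (a + 1))⁻¹ * w a)
      rw [mul_inv_cancel_left, ← hinv, norm_inv_eq] at hle
      rw [norm_mul_of_dir_ne hred, norm_of_mul hdir]
      omega

theorem le_norm_icoProd (hc : ∀ i, IsReducedConj (y i) (w i) (k i)) {a n : ℕ} (han : a ≤ n)
    (hno : ∀ i, a ≤ i → i < n → NoReductionAt w k i) :
    2 * (w a).norm + n + 1 ≤ (icoProd y a (n + 1)).norm + a := by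
  obtain ⟨hdir, hnorm⟩ := le_norm_inv_mul_icoProd hc han hno
  have := norm_mul_of_dir_ne ((hc a).dir_inv_mul_of.trans_ne hdir.symm)
  rw [mul_inv_cancel_left, (hc a).norm_mul_of] at this
  omega

/-- Both `y a` and the whole product begin with the letter `xₐ`, which therefore cancels in the
product of the remaining factors. -/
theorem dir_inv_mul_ne_of_icoProd_eq (hc : ∀ i, IsReducedConj (y i) (w i) (k i)) {a n : ℕ}
    (han : a < n) (hprod : icoProd y a (n + 1) = icoProd of a (n + 1))
    (hdir : dir (y a) = 2 * a + 1) (hno : ∀ i, a < i → i < n → NoReductionAt w k i) :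
    dir ((w a)⁻¹ * w (a + 1)) ≠ 2 * k a + 2 := by
  intro h
  have hrest : icoProd y (a + 1) (n + 1) =
      ((of a)⁻¹ * y a)⁻¹ * ((of a)⁻¹ * icoProd of a (n + 1)) := by
    rw [← hprod, icoProd_eq_mul y (show a < n + 1 by omega)]
    simp only [mul_inv_rev, inv_inv, mul_assoc, mul_inv_cancel_left, inv_mul_cancel_left]
  have hle := norm_mul_le ((of a)⁻¹ * y a)⁻¹ ((of a)⁻¹ * icoProd of a (n + 1))
  rw [← hrest, norm_inv_eq] at hle
  have hlong := le_norm_icoProd hc (a := a + 1) han hno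
  have hw := (hc a).norm_lt_of_dir_inv_mul h
  have hy := (hc a).norm_eq
  have hy' := norm_inv_of_mul_of_dir_eq hdir
  have hx := norm_icoProd_of (a := a) (b := n + 1) (by omega)
  have hx' := norm_inv_of_mul_of_dir_eq (dir_icoProd_of (a := a) (b := n + 1) (by omega))
  omega

theorem eq_of_of_noReductionAt (hc : ∀ i, IsReducedConj (y i) (w i) (k i)) {a n : ℕ}
    (han : a ≤ n) (hprod : icoProd y a (n + 1) = icoProd of a (n + 1))
    (hdir : dir (y a) = 2 * a + 1) (hno : ∀ i, a ≤ i → i < n → NoReductionAt w k i) :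
    y a = of a := by
  have hlong := le_norm_icoProd hc han hno
  rw [hprod, norm_icoProd_of (by omega)] at hlong
  have hw : w a = 1 := norm_eq_zero.1 (by omega)
  have hy := (hc a).eq
  rw [hw, one_mul, inv_one, mul_one] at hy
  rw [hy, dir_of] at hdir
  rw [hy, show k a = a by omega]

end NoReduction

theorem exists_norm_conj_lt {y : ℕ → FreeGroup ℕ} (hconj : ∀ i, ∃ k, IsConj (of k) (y i)) {a n : ℕ}
    (han : a < n) (hprod : icoProd y a (n + 1) = icoProd of a (n + 1))
    (hdir : dir (y a) = 2 * a + 1) (hne : y a ≠ of a) :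
    (∃ j, a < j ∧ j < n ∧ (y j * y (j + 1) * (y j)⁻¹).norm < (y (j + 1)).norm) ∨
    (∃ j, a < j ∧ j < n ∧ ((y (j + 1))⁻¹ * y j * y (j + 1)).norm < (y j).norm) ∨
    ((y (a + 1))⁻¹ * y a * y (a + 1)).norm < (y a).norm ∧ dir (y (a + 1)) = 2 * a + 1 := by
  choose k hk using hconj
  choose w hc using fun i => exists_isReducedConj (hk i)
  by_cases hno : ∀ i, a < i → i < n → NoReductionAt w k i
  · by_cases h : dir ((w (a + 1))⁻¹ * w a) = 2 * k (a + 1) + 1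
    · have hlt := (hc (a + 1)).norm_lt_of_dir_inv_mul' h
      have hw : w a ≠ 1 := by
        rintro hw
        simp [hw] at hlt
      refine .inr (.inr ⟨(hc a).norm_inv_conj_lt (hc (a + 1)) h, ?_⟩)
      rw [← (hc (a + 1)).dir_eq_of_dir_inv_mul h, ← (hc a).dir_eq hw, hdir]
    · refine absurd (eq_of_of_noReductionAt hc han.le hprod hdir fun i h₁ h₂ => ?_) hne
      rcases h₁.eq_or_lt with rfl | h₁
      · exact ⟨dir_inv_mul_ne_of_icoProd_eq hc han hprod hdir hno, h⟩
      · exact hno i h₁ h₂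
  · simp only [NoReductionAt] at hno
    push Not at hno
    obtain ⟨j, hj, hjn, h⟩ := hno
    by_cases h₁ : dir ((w j)⁻¹ * w (j + 1)) = 2 * k j + 2
    · exact .inl ⟨j, hj, hjn, (hc j).norm_conj_lt (hc (j + 1)) h₁⟩
    · exact .inr (.inl ⟨j, hj, hjn, (hc j).norm_inv_conj_lt (hc (j + 1)) (h h₁)⟩)

theorem exists_isConj_artin (i j : ℕ) : ∃ k, IsConj (of k) (artin i (of j)) := by
  by_cases hi : j = i
  · exact ⟨i + 1, isConj_iff.2 ⟨of i, by rw [hi, artin_of_self]⟩⟩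
  · by_cases hi' : j = i + 1
    · exact ⟨i, by rw [hi', artin_of_succ]⟩
    · exact ⟨j, by rw [artin_of_of_ne hi hi']⟩

theorem exists_isConj_artin_inv (i j : ℕ) : ∃ k, IsConj (of k) ((artin i)⁻¹ (of j)) := by
  by_cases hi : j = i
  · exact ⟨i + 1, by rw [hi, artin_inv_of_self]⟩
  · by_cases hi' : j = i + 1
    · exact ⟨i, isConj_iff.2 ⟨(of (i + 1))⁻¹, by rw [hi', artin_inv_of_succ, inv_inv]⟩⟩
    · exact ⟨j, by rw [artin_inv_of_of_ne hi hi']⟩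

theorem exists_isConj_artinAction {n : ℕ} (g : Braid n) (j : ℕ) :
    ∃ k, IsConj (of k) (artinAction n g (of j)) := by
  have hg : g ∈ upper n 0 := upper_zero n ▸ Subgroup.mem_top g
  induction hg using Subgroup.closure_induction'' generalizing j with
  | mem _ h =>
    obtain ⟨i, ⟨hi, hin⟩, rfl⟩ := h
    rw [artinAction_genσ hi hin]
    exact exists_isConj_artin i j
  | inv_mem _ h =>
    obtain ⟨i, ⟨hi, hin⟩, rfl⟩ := h
    rw [map_inv, artinAction_genσ hi hin]
    exact exists_isConj_artin_inv i j
  | one =>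
    rw [map_one, MulAut.one_apply]
    exact ⟨j, IsConj.refl _⟩
  | mul g h _ _ ihg ihh =>
    obtain ⟨k, hk⟩ := ihh j
    obtain ⟨l, hl⟩ := ihg k
    rw [map_mul, MulAut.mul_apply]
    exact ⟨l, hl.trans ((artinAction n g).toMonoidHom.map_isConj hk)⟩

theorem artin_icoProd_of {r j n : ℕ} (hj : r < j) (hjn : j < n) :
    artin j (icoProd of (r + 1) (n + 1)) = icoProd of (r + 1) (n + 1) := by
  have hsplit : icoProd of (r + 1) (n + 1) =
      icoProd of (r + 1) j * (of j * of (j + 1)) * icoProd of (j + 2) (n + 1) := by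
    rw [← icoProd_mul_icoProd of hj (by omega : j ≤ n + 1),
      icoProd_eq_mul of (by omega : j < n + 1), icoProd_eq_mul of (by omega : j + 1 < n + 1)]
    simp only [mul_assoc]
  have hfix {a b : ℕ} (h : ∀ i, a ≤ i → i < b → i ≠ j ∧ i ≠ j + 1) :
      artin j (icoProd of a b) = icoProd of a b := by
    rw [map_icoProd]
    exact icoProd_congr fun i h₁ h₂ => artin_of_of_ne (h i h₁ h₂).1 (h i h₁ h₂).2
  rw [hsplit, map_mul, map_mul, artin_apply_of_mul_of_succ, hfix (by omega), hfix (by omega)]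

theorem icoProd_artinAction_of {n r : ℕ} {g : Braid n} (hg : g ∈ upper n r) :
    icoProd (fun i => artinAction n g (of i)) (r + 1) (n + 1) = icoProd of (r + 1) (n + 1) := by
  rw [← map_icoProd]
  exact artinAction_apply_eq_self (fun j => artin_icoProd_of) hg

/-- The total length of the images of the generators `x₀, …, xₙ` under the Artin action. -/
def weight (n : ℕ) (g : Braid n) : ℕ :=
  ∑ i ∈ Finset.range (n + 1), (artinAction n g (of i)).norm

theorem weight_eq_add {n j : ℕ} (hjn : j < n) (g : Braid n) : weight n g =
    (artinAction n g (of j)).norm + (artinAction n g (of (j + 1))).norm +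
      ∑ i ∈ Finset.range (n + 1) \ {j, j + 1}, (artinAction n g (of i)).norm := by
  have hsub : {j, j + 1} ⊆ Finset.range (n + 1) := by grind
  rw [weight, ← Finset.sum_sdiff hsub, Finset.sum_pair (by omega), add_comm]

theorem weight_lt {n j : ℕ} (hjn : j < n) {g h : Braid n}
    (heq : ∀ i, i ≠ j → i ≠ j + 1 → artinAction n g (of i) = artinAction n h (of i))
    (hlt : (artinAction n g (of j)).norm + (artinAction n g (of (j + 1))).norm <
      (artinAction n h (of j)).norm + (artinAction n h (of (j + 1))).norm) :
    weight n g < weight n h := by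
  have hsum : ∑ i ∈ Finset.range (n + 1) \ {j, j + 1}, (artinAction n g (of i)).norm =
      ∑ i ∈ Finset.range (n + 1) \ {j, j + 1}, (artinAction n h (of i)).norm :=
    Finset.sum_congr rfl fun i hi => by grind
  rw [weight_eq_add hjn, weight_eq_add hjn, hsum]
  exact Nat.add_lt_add_right hlt _

section MulGenσ

variable {n j : ℕ} (hj : 0 < j) (hjn : j < n) (g : Braid n)
include hj hjn

theorem artinAction_mul_genσ (z : FreeGroup ℕ) :
    artinAction n (g * genσ n j) z = artinAction n g (artin j z) := by
  rw [map_mul, MulAut.mul_apply, artinAction_genσ hj hjn]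

theorem artinAction_mul_inv_genσ (z : FreeGroup ℕ) :
    artinAction n (g * (genσ n j)⁻¹) z = artinAction n g ((artin j)⁻¹ z) := by
  rw [map_mul, MulAut.mul_apply, map_inv, artinAction_genσ hj hjn]

variable {g}

theorem weight_mul_genσ_lt
    (h : (artinAction n g (of j) * artinAction n g (of (j + 1)) *
      (artinAction n g (of j))⁻¹).norm < (artinAction n g (of (j + 1))).norm) :
    weight n (g * genσ n j) < weight n g := by
  apply weight_lt hjn
  · intro i hi hi'
    rw [artinAction_mul_genσ hj hjn, artin_of_of_ne hi hi']
  · rw [artinAction_mul_genσ hj hjn, artinAction_mul_genσ hj hjn, artin_of_self, artin_of_succ,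
      map_mul, map_mul, map_inv]
    omega

theorem weight_mul_inv_genσ_lt
    (h : ((artinAction n g (of (j + 1)))⁻¹ * artinAction n g (of j) *
      artinAction n g (of (j + 1))).norm < (artinAction n g (of j)).norm) :
    weight n (g * (genσ n j)⁻¹) < weight n g := by
  apply weight_lt hjn
  · intro i hi hi'
    rw [artinAction_mul_inv_genσ hj hjn, artin_inv_of_of_ne hi hi']
  · rw [artinAction_mul_inv_genσ hj hjn, artinAction_mul_inv_genσ hj hjn, artin_inv_of_self,
      artin_inv_of_succ, map_mul, map_mul, map_inv]
    omega

end MulGenσ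

theorem sigmaPositive_mul_genσ_of_mem_upper {n i : ℕ} (hi : 0 < i) (hin : i < n) {h : Braid n}
    (hh : h ∈ upper n i) : SigmaPositive n i (h * genσ n i) := by
  induction hh using Subgroup.closure_induction_left with
  | one => simpa using sigmaPositive_genσ hi hin
  | mul_left _ hx h _ ih =>
    obtain ⟨j, ⟨hj, hjn⟩, rfl⟩ := hx
    simpa only [mul_assoc] using ih.genσ_mul hj.le hjn
  | inv_mul_cancel _ hx h _ ih =>
    obtain ⟨j, ⟨hj, hjn⟩, rfl⟩ := hx
    simpa only [mul_assoc] using ih.inv_genσ_mul hj hjn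

/-- Handle reduction, guided by the Artin action: some `σⱼ^{±1}` with `j ≥ r + 1` shortens the
images of the generators, and `σ_{r+1}` is only ever split off positively. -/
theorem sigmaPositive_of_dir {n r : ℕ} (hrn : r + 1 < n) {g : Braid n} (hg : g ∈ upper n r)
    (hdir : dir (artinAction n g (of (r + 1))) = 2 * (r + 1) + 1)
    (hne : artinAction n g (of (r + 1)) ≠ of (r + 1)) : SigmaPositive n (r + 1) g := by
  induction hN : weight n g using Nat.strong_induction_on generalizing g with | _ N ih
  subst hN
  rcases exists_norm_conj_lt (exists_isConj_artinAction g) hrn (icoProd_artinAction_of hg) hdir hne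
    with ⟨j, hj, hjn, hlt⟩ | ⟨j, hj, hjn, hlt⟩ | ⟨hlt, hdir'⟩
  · have hfix : artinAction n (g * genσ n j) (of (r + 1)) = artinAction n g (of (r + 1)) := by
      rw [artinAction_mul_genσ (by omega) hjn, artin_of_of_ne (by omega) (by omega)]
    have hpos := ih _ (weight_mul_genσ_lt (by omega) hjn hlt)
      (mul_mem hg (genσ_mem_upper (by omega))) (by rwa [hfix]) (by rwa [hfix]) rfl
    simpa using hpos.mul_inv_genσ hj hjn
  · have hfix : artinAction n (g * (genσ n j)⁻¹) (of (r + 1)) = artinAction n g (of (r + 1)) := by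
      rw [artinAction_mul_inv_genσ (by omega) hjn, artin_inv_of_of_ne (by omega) (by omega)]
    have hpos := ih _ (weight_mul_inv_genσ_lt (by omega) hjn hlt)
      (mul_mem hg (inv_mem (genσ_mem_upper (by omega)))) (by rwa [hfix]) (by rwa [hfix]) rfl
    simpa using hpos.mul_genσ hj.le hjn
  · have himage : artinAction n (g * (genσ n (r + 1))⁻¹) (of (r + 1)) =
        artinAction n g (of (r + 1 + 1)) := by
      rw [artinAction_mul_inv_genσ (by omega) hrn, artin_inv_of_self]
    have hmem := mul_mem hg (inv_mem (genσ_mem_upper (n := n) r.lt_succ_self))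
    suffices SigmaPositive n (r + 1) (g * (genσ n (r + 1))⁻¹ * genσ n (r + 1)) by simpa using this
    by_cases hfix : artinAction n g (of (r + 1 + 1)) = of (r + 1)
    · exact sigmaPositive_mul_genσ_of_mem_upper r.succ_pos hrn
        (mem_upper_succ_of_artinAction_eq_self hmem (himage.trans hfix))
    · exact (ih _ (weight_mul_inv_genσ_lt (by omega) hrn hlt) hmem (by rwa [himage])
        (by rwa [himage]) rfl).mul_genσ le_rfl hrn

theorem exists_sigmaPositive_conj_genσ {n i : ℕ} (hi : 0 < i) (hin : i < n) (g : Braid n) :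
    ∃ r, 1 ≤ r ∧ r ≤ n - 1 ∧ SigmaPositive n r (g * genσ n i * g⁻¹) := by
  suffices ∀ r ≤ n, g * genσ n i * g⁻¹ ∈ upper n r →
      ∃ r, 1 ≤ r ∧ r ≤ n - 1 ∧ SigmaPositive n r (g * genσ n i * g⁻¹) from
    this 0 n.zero_le (upper_zero n ▸ Subgroup.mem_top _)
  intro r hr
  induction hr using Nat.decreasingInduction with
  | self =>
    intro hmem
    rw [upper_eq_bot (by omega), Subgroup.mem_bot, conj_eq_one_iff] at hmem
    exact absurd hmem (genσ_ne_one hi hin)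
  | of_succ r hr ih =>
    intro hmem
    by_cases hfix : artinAction n (g * genσ n i * g⁻¹) (of (r + 1)) = of (r + 1)
    · exact ih (mem_upper_succ_of_artinAction_eq_self hmem hfix)
    · have hrn : r + 1 < n := by
        by_contra h
        rw [upper_eq_bot (by omega), Subgroup.mem_bot, conj_eq_one_iff] at hmem
        exact genσ_ne_one hi hin hmem
      exact ⟨r + 1, by omega, by omega,
        sigmaPositive_of_dir hrn hmem (dir_artinAction_conj hi hin hmem hfix) hfix⟩

end DehornoyOrder

/-- Theorem (Property S for the Dehornoy ordering with respect to band generators):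
for all `α, β ∈ B_n` and `1 ≤ i < j ≤ n`, `αβ <_D α a_{i,j} β` and `α a_{i,j}⁻¹ β <_D αβ`. -/
theorem dehornoy_property_S (n : ℕ) (hn : 2 ≤ n) (α β : Braid n)
    (i j : ℕ) (h1 : 1 ≤ i) (hij : i < j) (hjn : j ≤ n) :
    dehornoyLt n (α * β) (α * band n i j * β) ∧
    dehornoyLt n (α * (band n i j)⁻¹ * β) (α * β) := by
  unfold band
  generalize ((List.range' (i+1) (j-1-i)).reverse.map (genσ n)).prod = c
  obtain ⟨r, hr, hrn, hpos⟩ :=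
    DehornoyOrder.exists_sigmaPositive_conj_genσ h1 (by omega : i < n) (β⁻¹ * c)
  refine ⟨⟨r, hr, hrn, ?_⟩, ⟨r, hr, hrn, ?_⟩⟩ <;>
  · convert hpos using 1
    group
end
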